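/- Let x be a fractional Brownian motion with Hurst parameter ν ∈ (0,1/2) and q ≥ 1 an integer. (i) If ν = 1/(2q) (hence q ≥ 2), then for every 0 ≤ s < t ≤ 1 and every family of partitions (s = s^m_0 < ⋯ < s^m_m = t)_{m∈ℕ} with s^m_{j+1} − s^m_j ≤ 1/m, one has lim_{m→∞} lim_{n→∞} E[|n^{−1/2} Σ_{j=0}^{m−1} J_{s^m_j}^{s^m_{j+1}}(x^q; h^{n,q}) − (−1/2)^q (t−s)|²] = 0. (ii) If ν < 1/(2q), then for every 0 ≤ s < t ≤ 1, n^{−(1−qν)} J_s^t(x^q;h^{n,q}) converges to (−1/2)^q (t−s) in L²(Ω) as n → ∞. -/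

import Mathlib

/-! Self-similarity removes all powers of `n` except one: the rescaled discrete integral is
`n⁻¹ ∑ₖ Yₖ` with `Yₖ = ξₖ^q H_q(Nₖ) / q!`, where `Nₖ` is the unit increment after the grid index `k`
and `ξₖ` is the increment from the base point of the block up to `k`. Since
`Cov(ξₖ, Nₖ) = (φ(d + 1) - φ(d) - 1) / 2` with `φ(z) = |z|^(2ν)` and `d` the distance from the base
point to `k`, and since `φ` is concave with increments tending to `0` for `2ν < 1`, this covariance
is close to `-1/2`. The mean of `Yₖ` is its `q`-th power, hence close to `(-1/2)^q`, and a variance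
computation shows that the average of the `Yₖ` concentrates.

Moments `E[A^a B^b H_p(U) H_r(V)]` of a Gaussian vector are computed by integration by parts
(`gaussian_ibp`), which gives the recursion `WickRec`. In `E[ξₖ^q ξₗ^q H_q(Nₖ) H_q(Nₗ)]` the
contraction pairing `ξₖ` with `Nₖ` and `ξₗ` with `Nₗ` yields `(q!)² (-1/2)^(2q)`. Every other
contraction contains the covariance of `ξₖ` and `Nₗ` or of `ξₗ` and `Nₖ`, or the correlation
`ρ(k - l)` of `Nₖ` and `Nₗ`; in the latter case the remaining factors are bounded by `L^(2q)`, where `L²` bounds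
the variances of `ξₖ` and `ξₗ` (`WickRec.aligned`, `summand_moments`).

The error terms are summed over all pairs `k, l` by telescoping: the increments of `φ` on `[0, n]`
add up to `n^(2ν)`, and `∑ |ρ(w)| ≤ 2` over `w ≥ 0`. With `m` blocks the mean square distance
from the limit is therefore at most a constant times `((1 + n^(2ν)) (2m + 3) + L^(2q)) / n`, up to `2 / n²` for the
rounding in the number of terms (`variation_bound`). With one block `L^(2q) = n^(2qν) = o(n)` when
`ν < 1/(2q)`. When `ν = 1/(2q)`, blocks of length at most `1/m` give `L^(2q) = n/m`, so the bound
tends to a multiple of `1/m`. -/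

open MeasureTheory ProbabilityTheory Filter
open scoped ENNReal NNReal

noncomputable section

variable {Ω : Type*} [MeasurableSpace Ω]

/-- The smallest point `⌈n s⌉ / n` of the uniform `n`-partition that is `≥ s`. -/
def eps (n : ℕ) (s : ℝ) : ℝ := (⌈(n : ℝ) * s⌉ : ℝ) / n

/-- Discrete integral `J_s^t(f;h)` of a two-parameter process `f` against the
increments `h k = h_{t_k t_{k+1}}` along the uniform `n`-partition. -/
def Jtwo (n : ℕ) (f : ℝ → ℝ → Ω → ℝ) (h : ℕ → Ω → ℝ) (s t : ℝ) (ω : Ω) : ℝ :=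
  ∑ k ∈ Finset.range n,
    if s ≤ (k : ℝ) / n ∧ (k : ℝ) / n < t then f (eps n s) ((k : ℝ) / n) ω * h k ω else 0

/-- Discrete integral `J_s^t(y;h)` of a one-parameter path `y`. -/
def Jone (n : ℕ) (y : ℝ → Ω → ℝ) (h : ℕ → Ω → ℝ) (s t : ℝ) (ω : Ω) : ℝ :=
  ∑ k ∈ Finset.range n,
    if s ≤ (k : ℝ) / n ∧ (k : ℝ) / n < t then (y ((k : ℝ) / n) ω - y (eps n s) ω) * h k ω else 0

/-- A scalar `(L_p, ν, ℓ)`-rough path over the continuous process `X`. -/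
def IsRoughPath (P : Measure Ω) (p : ℝ≥0∞) (ν : ℝ) (ℓ : ℕ) (C : ℝ)
    (X : ℝ → Ω → ℝ) (x : ℕ → ℝ → ℝ → Ω → ℝ) : Prop :=
  (∀ i s t, Measurable (x i s t)) ∧
  (∀ ω, ContinuousOn (fun t => X t ω) (Set.Icc 0 1)) ∧
  (∀ s t ω, x 0 s t ω = 1) ∧
  (∀ s t ω, x 1 s t ω = X t ω - X s ω) ∧
  (∀ k, 1 ≤ k → k ≤ ℓ - 1 → ∀ s u t : ℝ, 0 ≤ s → s ≤ u → u ≤ t → t ≤ 1 → ∀ ω,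
    x k s t ω = ∑ j ∈ Finset.range (k + 1), x (k - j) s u ω * x j u t ω) ∧
  (∀ k, k ≤ ℓ - 1 → ∀ s t : ℝ, 0 ≤ s → s ≤ t → t ≤ 1 →
    eLpNorm (x k s t) p P ≤ ENNReal.ofReal ((C * (t - s) ^ ν) ^ k))

/-- `(y^{(0)},…,y^{(ℓ-1)})` is controlled by the rough path `x` in `L₂`,
with remainder constant `K₀`. -/
def Controlled (P : Measure Ω) (ν : ℝ) (ℓ : ℕ) (K₀ : ℝ)
    (x : ℕ → ℝ → ℝ → Ω → ℝ) (y : ℕ → ℝ → Ω → ℝ) : Prop :=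
  (∀ k, k ≤ ℓ - 1 → ∀ t, Measurable (y k t)) ∧
  (∀ k, k ≤ ℓ - 1 → ∀ ω, ContinuousOn (fun t => y k t ω) (Set.Icc 0 1)) ∧
  (∀ ω, y 0 0 ω = 0) ∧
  (∀ k, k ≤ ℓ - 1 → ∀ s t : ℝ, 0 ≤ s → s ≤ t → t ≤ 1 →
    eLpNorm (fun ω => y k t ω - y k s ω -
        ∑ j ∈ Finset.Icc 1 (ℓ - 1 - k), y (k + j) s ω * x j s t ω) 2 P
      ≤ ENNReal.ofReal (K₀ * (t - s) ^ (((ℓ - k : ℕ) : ℝ) * ν)))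

/-- Covariance of one-dimensional fractional Brownian motion. -/
def fbmCov (ν s t : ℝ) : ℝ := (s ^ (2 * ν) + t ^ (2 * ν) - |t - s| ^ (2 * ν)) / 2

/-- `x` is a fractional Brownian motion with Hurst parameter `ν` on `[0,1]`:
a measurable process with (a.s.) continuous sample paths all of whose finite
linear combinations are centered Gaussian with the fBm covariance. -/
def IsFBM (P : Measure Ω) (ν : ℝ) (x : ℝ → Ω → ℝ) : Prop :=
  (∀ t, Measurable (x t)) ∧
  (∀ᵐ ω ∂P, ContinuousOn (fun t => x t ω) (Set.Icc 0 1)) ∧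
  ∀ (m : ℕ) (t : Fin m → ℝ), (∀ j, t j ∈ Set.Icc (0 : ℝ) 1) →
    ∀ a : Fin m → ℝ,
      P.map (fun ω => ∑ j, a j * x (t j) ω) =
        gaussianReal 0 (∑ j, ∑ k, a j * a k * fbmCov ν (t j) (t k)).toNNReal

/-- Correlation function of the increments of fBm. -/
def rho (ν : ℝ) (k : ℤ) : ℝ :=
  (|(k : ℝ) + 1| ^ (2 * ν) + |(k : ℝ) - 1| ^ (2 * ν) - 2 * |(k : ℝ)| ^ (2 * ν)) / 2

/-- Hermite polynomial `H_q` (probabilists' normalization). -/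
def Hq (q : ℕ) (t : ℝ) : ℝ := Polynomial.aeval t (Polynomial.hermite q)

/-- The increments `h^{n,q}_{t_k t_{k+1}} = H_q(n^ν δx_{t_k t_{k+1}})`. -/
def hermIncr (x : ℝ → Ω → ℝ) (ν : ℝ) (n q : ℕ) (k : ℕ) (ω : Ω) : ℝ :=
  Hq q ((n : ℝ) ^ ν * (x (((k : ℝ) + 1) / n) ω - x ((k : ℝ) / n) ω))

/-- Canonical rough-path lift of a one-dimensional process: `x^i_{st} = (δx_{st})^i / i!`. -/
def xlift (x : ℝ → Ω → ℝ) (i : ℕ) (s t : ℝ) (ω : Ω) : ℝ :=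
  (x t ω - x s ω) ^ i / (Nat.factorial i : ℝ)

/-- Hermite coefficient `a_q = (1/q!) ∫ f H_q dγ` of `f` in `L²(γ)`. -/
def hermCoeff (f : ℝ → ℝ) (q : ℕ) : ℝ :=
  (Nat.factorial q : ℝ)⁻¹ * ∫ t, f t * Hq q t ∂(gaussianReal 0 1)

/-- `c_p = E|N|^p = 2^{p/2} Γ((p+1)/2)/√π`. -/
def cconst (r : ℝ) : ℝ := (2 : ℝ) ^ (r / 2) * Real.Gamma ((r + 1) / 2) / Real.sqrt Real.pi

/-! ### Gaussian integration by parts -/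

/-- `X` lies in `L^p` for every finite `p`; this class of random variables is an algebra. -/
def LpAll (P : Measure Ω) (X : Ω → ℝ) : Prop := ∀ p : ℝ≥0∞, p ≠ ∞ → MemLp X p P

lemma LpAll.mul {P : Measure Ω} {X Y : Ω → ℝ} (hX : LpAll P X) (hY : LpAll P Y) :
    LpAll P (fun ω => X ω * Y ω) := by
  intro p hp
  have h2 : 2 * p ≠ ∞ := ENNReal.mul_ne_top (by simp) hp
  have : ENNReal.HolderTriple (2 * p) (2 * p) p := ⟨by
    rw [ENNReal.mul_inv (by simp) (by simp), ← add_mul, ENNReal.inv_two_add_inv_two, one_mul]⟩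
  exact (hY _ h2).mul' (hX _ h2)

lemma LpAll.add {P : Measure Ω} {X Y : Ω → ℝ} (hX : LpAll P X) (hY : LpAll P Y) :
    LpAll P (fun ω => X ω + Y ω) := fun p hp => (hX p hp).add (hY p hp)

lemma LpAll.const {P : Measure Ω} [IsFiniteMeasure P] (c : ℝ) : LpAll P (fun _ => c) :=
  fun _ _ => memLp_const c

lemma LpAll.pow {P : Measure Ω} [IsFiniteMeasure P] {X : Ω → ℝ} (hX : LpAll P X) (k : ℕ) :
    LpAll P (fun ω => X ω ^ k) := by
  induction k with
  | zero => simpa using LpAll.const 1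
  | succ k ih => simpa only [pow_succ] using ih.mul hX

lemma LpAll.integrable {P : Measure Ω} {X : Ω → ℝ} (hX : LpAll P X) : Integrable X P :=
  memLp_one_iff_integrable.1 (hX 1 (by simp))

lemma LpAll.aeval {P : Measure Ω} [IsFiniteMeasure P] {ι : Type*} {Z : ι → Ω → ℝ}
    (hZ : ∀ i, LpAll P (Z i)) (p : MvPolynomial ι ℝ) :
    LpAll P (fun ω => MvPolynomial.aeval (fun i => Z i ω) p) := by
  induction p using MvPolynomial.induction_on with
  | C a => simpa using LpAll.const a
  | add p q hp hq => simpa using hp.add hq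
  | mul_X p i hp => simpa using hp.mul (hZ i)

lemma hasGaussianLaw_lpAll {P : Measure Ω} {X : Ω → ℝ} (hX : HasGaussianLaw X P) : LpAll P X :=
  fun _ hp => hX.memLp hp

/-- The moment recursion of a centered Gaussian; `k - 1` is harmless at `k = 0`. -/
lemma gaussian_moment_succ (v : ℝ≥0) (k : ℕ) :
    ∫ x, x ^ (k + 1) ∂(gaussianReal 0 v) = v * k * ∫ x, x ^ (k - 1) ∂(gaussianReal 0 v) := by
  rcases eq_or_ne v 0 with rfl | hv
  · simp
  have hL : LpAll (gaussianReal 0 v) (fun x : ℝ => x) :=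
    fun p hp => memLp_id_gaussianReal' p hp
  have hI : ∀ k : ℕ, Integrable (fun x : ℝ => gaussianPDFReal 0 v x * x ^ k) := by
    intro k
    have h := (hL.pow k).integrable
    rw [gaussianReal_of_var_ne_zero 0 hv, integrable_withDensity_iff_integrable_smul₀'
      (by fun_prop) (by simp [gaussianPDF_lt_top])] at h
    simpa [toReal_gaussianPDF] using h
  have hv' : (v : ℝ) ≠ 0 := by exact_mod_cast hv
  have hd : ∀ x : ℝ, HasDerivAt (fun x => gaussianPDFReal 0 v x * x ^ k)
      ((k : ℝ) * (gaussianPDFReal 0 v x * x ^ (k - 1))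
        - (v : ℝ)⁻¹ * (gaussianPDFReal 0 v x * x ^ (k + 1))) x := by
    intro x
    have h1 : HasDerivAt (gaussianPDFReal 0 v) (-(x / v) * gaussianPDFReal 0 v x) x := by
      have : HasDerivAt (fun x : ℝ => -(x - 0) ^ 2 / (2 * (v : ℝ))) (-(x / v)) x := by
        have := ((((hasDerivAt_id x).sub_const 0).pow 2).neg.div_const (2 * (v : ℝ)))
        convert! this using 1
        simp
        field_simp
      have h2 := (this.exp).const_mul ((√(2 * Real.pi * v))⁻¹)
      convert! h2 using 1
      simp only [gaussianPDFReal]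
      ring
    convert! h1.mul (hasDerivAt_pow k x) using 1
    rw [pow_succ]; field_simp; ring
  have h0 := integral_eq_zero_of_hasDerivAt_of_integrable hd
    (((hI (k - 1)).const_mul _).sub ((hI (k + 1)).const_mul _)) (hI k)
  rw [integral_sub ((hI (k - 1)).const_mul _) ((hI (k + 1)).const_mul _), integral_const_mul,
    integral_const_mul] at h0
  rw [integral_gaussianReal_eq_integral_smul hv, integral_gaussianReal_eq_integral_smul hv]
  simp only [smul_eq_mul]
  field_simp at h0
  linarith

/-- Evaluation of a polynomial in one variable `X` whose coefficients are polynomials in the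
family `W`. -/
abbrev evXW {ι : Type*} (x : ℝ) (w : ι → ℝ) : Polynomial (MvPolynomial ι ℝ) →+* ℝ :=
  Polynomial.eval₂RingHom ((MvPolynomial.aeval w : MvPolynomial ι ℝ →ₐ[ℝ] ℝ) : _ →+* ℝ) x

lemma lpAll_evXW {P : Measure Ω} [IsFiniteMeasure P] {ι : Type*} {X : Ω → ℝ} {W : ι → Ω → ℝ}
    (hX : LpAll P X) (hW : ∀ i, LpAll P (W i)) (p : Polynomial (MvPolynomial ι ℝ)) :
    LpAll P (fun ω => evXW (X ω) (fun i => W i ω) p) := by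
  induction p using Polynomial.induction_on' with
  | add p q hp hq => simpa only [map_add] using hp.add hq
  | monomial k m => simpa using (LpAll.aeval hW m).mul (hX.pow k)

/-- One-dimensional integration by parts, conditionally on an independent family `W`. -/
lemma stein_indep {P : Measure Ω} [IsProbabilityMeasure P] {ι : Type*} [Fintype ι]
    {X : Ω → ℝ} {W : ι → Ω → ℝ} {v : ℝ≥0} (hXm : AEMeasurable X P)
    (hX : P.map X = gaussianReal 0 v) (hWm : ∀ i, AEMeasurable (W i) P)
    (hW : ∀ i, LpAll P (W i)) (hind : IndepFun X (fun ω i => W i ω) P)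
    (p : Polynomial (MvPolynomial ι ℝ)) :
    ∫ ω, X ω * evXW (X ω) (fun i => W i ω) p ∂P =
      v * ∫ ω, evXW (X ω) (fun i => W i ω) (Polynomial.derivative p) ∂P := by
  have hXL : LpAll P X := by
    intro r hr
    have := memLp_id_gaussianReal' (μ := 0) (v := v) r hr
    rw [← hX, memLp_map_measure_iff (by fun_prop) hXm] at this
    exact this
  induction p using Polynomial.induction_on' with
  | add p q hp hq =>
    simp only [map_add, mul_add]
    rw [integral_add (hXL.mul (lpAll_evXW hXL hW p)).integrable
      (hXL.mul (lpAll_evXW hXL hW q)).integrable, hp, hq,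
      integral_add (lpAll_evXW hXL hW _).integrable (lpAll_evXW hXL hW _).integrable]
    ring
  | monomial k m =>
    have hmom : ∀ j : ℕ, ∫ ω, X ω ^ j ∂P = ∫ x, x ^ j ∂(gaussianReal 0 v) := by
      intro j
      rw [← hX, integral_map hXm (by fun_prop)]
    have hfac : ∀ j : ℕ, ∫ ω, X ω ^ j * MvPolynomial.aeval (fun i => W i ω) m ∂P =
        (∫ ω, X ω ^ j ∂P) * ∫ ω, MvPolynomial.aeval (fun i => W i ω) m ∂P := by
      intro j
      have hc : Continuous fun w : ι → ℝ => MvPolynomial.aeval w m := by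
        simpa using MvPolynomial.continuous_eval m
      exact hind.integral_comp_mul_comp (f := fun x => x ^ j)
        (g := fun w => MvPolynomial.aeval w m) hXm (aemeasurable_pi_lambda _ hWm) (by fun_prop)
        hc.aestronglyMeasurable
    have e1 : ∀ ω, X ω * evXW (X ω) (fun i => W i ω) (Polynomial.monomial k m) =
        X ω ^ (k + 1) * MvPolynomial.aeval (fun i => W i ω) m := by
      intro ω; simp; ring
    have e2 : ∀ ω, evXW (X ω) (fun i => W i ω) (Polynomial.derivative (Polynomial.monomial k m)) =
        (k : ℝ) * (X ω ^ (k - 1) * MvPolynomial.aeval (fun i => W i ω) m) := by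
      intro ω; rw [Polynomial.derivative_monomial]; simp; ring
    simp only [e1, e2]
    rw [integral_const_mul, hfac, hfac, hmom, hmom, gaussian_moment_succ]
    ring

/-- The chain rule along the affine line `X ↦ c X + W`, whose offsets `W` are left as
indeterminates. -/
lemma derivative_aeval_affine {ι : Type*} [Fintype ι] [DecidableEq ι] (c : ι → ℝ)
    (p : MvPolynomial ι ℝ) :
    Polynomial.derivative (MvPolynomial.aeval (fun i => Polynomial.C (MvPolynomial.C (c i)) *
      Polynomial.X + Polynomial.C (MvPolynomial.X i) : ι → Polynomial (MvPolynomial ι ℝ)) p) =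
    ∑ j, Polynomial.C (MvPolynomial.C (c j)) *
      MvPolynomial.aeval (fun i => Polynomial.C (MvPolynomial.C (c i)) *
      Polynomial.X + Polynomial.C (MvPolynomial.X i) : ι → Polynomial (MvPolynomial ι ℝ))
        (MvPolynomial.pderiv j p) := by
  induction p using MvPolynomial.induction_on with
  | C a =>
    rw [show (MvPolynomial.C a : MvPolynomial ι ℝ) = algebraMap ℝ _ a from rfl]
    simp only [AlgHom.commutes, Derivation.map_algebraMap, map_zero, mul_zero,
      Finset.sum_const_zero]
    rw [IsScalarTower.algebraMap_apply ℝ (MvPolynomial ι ℝ) (Polynomial (MvPolynomial ι ℝ))]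
    exact Polynomial.derivative_C
  | add p q hp hq => simp [hp, hq, mul_add, Finset.sum_add_distrib]
  | mul_X p i hp =>
    have hs : ∀ j, MvPolynomial.aeval (fun i => Polynomial.C (MvPolynomial.C (c i)) *
        Polynomial.X + Polynomial.C (MvPolynomial.X i) : ι → Polynomial (MvPolynomial ι ℝ))
        (MvPolynomial.pderiv j (MvPolynomial.X i : MvPolynomial ι ℝ)) = if j = i then 1 else 0 := by
      intro j
      by_cases h : j = i
      · subst h; simp
      · rw [MvPolynomial.pderiv_X_of_ne (Ne.symm h)]; simp [h]
    simp only [map_mul, MvPolynomial.aeval_X, Polynomial.derivative_mul, hp,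
      Derivation.leibniz, smul_eq_mul, map_add, hs,
      Polynomial.derivative_C, Polynomial.derivative_X]
    simp only [mul_add, Finset.sum_add_distrib, mul_ite, mul_one, mul_zero, Finset.sum_ite_eq',
      Finset.mem_univ, if_true, zero_mul, zero_add, add_zero, add_mul, Finset.sum_mul]
    rw [add_comm]
    refine congrArg₂ (· + ·) (mul_comm _ _) (congrArg₂ (· + ·) ?_ ?_)
    · exact Finset.sum_congr rfl fun j _ => by rw [mul_assoc, mul_comm (MvPolynomial.aeval _ _)]
    · exact Finset.sum_congr rfl fun j _ => by rw [mul_assoc, mul_comm (MvPolynomial.aeval _ _)]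

/-- Gaussian integration by parts (Stein, Isserlis) for polynomials in a centered Gaussian
vector, possibly degenerate. It reduces to dimension one by subtracting from every coordinate its
regression on `Z i₀`, which leaves a family independent of `Z i₀`. -/
theorem gaussian_ibp {P : Measure Ω} [IsProbabilityMeasure P] {ι : Type*} [Fintype ι]
    [DecidableEq ι] {Z : ι → Ω → ℝ} (hZ : HasGaussianLaw (fun ω i => Z i ω) P)
    (h0 : ∀ i, ∫ ω, Z i ω ∂P = 0) (i₀ : ι) (p : MvPolynomial ι ℝ) :
    ∫ ω, Z i₀ ω * MvPolynomial.aeval (fun i => Z i ω) p ∂P =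
      ∑ j, cov[Z i₀, Z j; P] *
        ∫ ω, MvPolynomial.aeval (fun i => Z i ω) (MvPolynomial.pderiv j p) ∂P := by
  have hZi : ∀ i, HasGaussianLaw (Z i) P := fun i => hZ.eval i
  have hL : ∀ i, LpAll P (Z i) := fun i => hasGaussianLaw_lpAll (hZi i)
  have hL2 : ∀ i, MemLp (Z i) 2 P := fun i => hL i 2 (by simp)
  set v := Var[Z i₀; P] with hv
  have hcov0 : v = 0 → ∀ j, cov[Z i₀, Z j; P] = 0 := by
    intro hv0 j
    have := ae_eq_integral_of_variance_eq_zero (hL2 i₀) hv0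
    rw [covariance]
    apply integral_eq_zero_of_ae
    filter_upwards [this] with ω hω
    simp [hω]
  set c : ι → ℝ := fun j => cov[Z i₀, Z j; P] / v with hc
  have hvc : ∀ j, v * c j = cov[Z i₀, Z j; P] := by
    intro j
    by_cases h : v = 0
    · simp [h, hcov0 h j]
    · simp only [hc]; field_simp
  set W : ι → Ω → ℝ := fun j ω => Z j ω - c j * Z i₀ ω with hW
  have hpair : HasGaussianLaw (fun ω => ((fun _ : Unit => Z i₀ ω), fun j => W j ω)) P := by
    let L : (ι → ℝ) →L[ℝ] ((Unit → ℝ) × (ι → ℝ)) :=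
      (ContinuousLinearMap.pi fun _ => ContinuousLinearMap.proj i₀).prod
        (ContinuousLinearMap.pi fun j =>
          ContinuousLinearMap.proj j - c j • ContinuousLinearMap.proj i₀)
    have := hZ.map_fun L
    exact this
  have hcovW : ∀ (i : Unit) j, cov[(fun _ : Unit => Z i₀) i, W j; P] = 0 := by
    intro _ j
    simp only [hW]
    rw [covariance_fun_sub_right (hL2 i₀) (hL2 j) ((hL2 i₀).const_mul _),
      covariance_const_mul_right, covariance_self (hZi i₀).aemeasurable, ← hv]
    linarith [hvc j]
  have hind0 := hpair.indepFun_of_covariance_eval (X := fun _ : Unit => Z i₀) (Y := W) hcovW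
  have hind : IndepFun (Z i₀) (fun ω i => W i ω) P :=
    hind0.comp (φ := fun f : Unit → ℝ => f ()) (ψ := id) (by fun_prop) measurable_id
  have hXlaw : P.map (Z i₀) = gaussianReal 0 v.toNNReal := by
    rw [(hZi i₀).map_eq_gaussianReal, h0]
  have hWL : ∀ i, LpAll P (W i) := fun i => by
    have := (hL i).add ((LpAll.const (P := P) (-c i)).mul (hL i₀))
    convert this using 2
    simp only [hW]; ring
  have hWm : ∀ i, AEMeasurable (W i) P := fun i => ((hWL i) 1 (by simp)).aemeasurable
  have key := stein_indep (hZi i₀).aemeasurable hXlaw hWm hWL hind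
    (MvPolynomial.aeval (fun i => Polynomial.C (MvPolynomial.C (c i)) *
      Polynomial.X + Polynomial.C (MvPolynomial.X i) : ι → Polynomial (MvPolynomial ι ℝ)) p)
  have hev : ∀ (p : MvPolynomial ι ℝ) ω, evXW (Z i₀ ω) (fun i => W i ω)
      (MvPolynomial.aeval (fun i => Polynomial.C (MvPolynomial.C (c i)) *
      Polynomial.X + Polynomial.C (MvPolynomial.X i) : ι → Polynomial (MvPolynomial ι ℝ)) p) =
      MvPolynomial.aeval (fun i => Z i ω) p := by
    intro p ω
    induction p using MvPolynomial.induction_on with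
    | C a =>
      rw [show (MvPolynomial.C a : MvPolynomial ι ℝ) = algebraMap ℝ _ a from rfl]
      rw [AlgHom.commutes, AlgHom.commutes,
        IsScalarTower.algebraMap_apply ℝ (MvPolynomial ι ℝ) (Polynomial (MvPolynomial ι ℝ))]
      simp [Polynomial.algebraMap_eq, MvPolynomial.algebraMap_eq]
    | add p q hp hq => simp only [map_add, hp, hq]
    | mul_X p i hp =>
      simp only [map_mul, hp, MvPolynomial.aeval_X, map_add]
      congr 1
      simp [hW]
  rw [derivative_aeval_affine] at key
  simp only [map_sum, map_mul, hev] at key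
  rw [key, integral_finsetSum]
  · rw [Finset.mul_sum]
    refine Finset.sum_congr rfl fun j _ => ?_
    have : ∀ ω, (evXW (Z i₀ ω) (fun i => W i ω)) (Polynomial.C (MvPolynomial.C (c j))) = c j := by
      intro ω; simp
    simp only [this]
    rw [integral_const_mul, Real.coe_toNNReal _ (variance_nonneg _ _), ← mul_assoc, hvc]
  · intro j _
    have : ∀ ω, (evXW (Z i₀ ω) (fun i => W i ω)) (Polynomial.C (MvPolynomial.C (c j))) = c j := by
      intro ω; simp
    simp only [this]
    exact ((LpAll.aeval hL _).integrable).const_mul _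

/-! ### The Wick recursion and its consequences -/

/-- The recursion satisfied by `M a b p r = E[A^a B^b H_p(U) H_r(V)]` for a centered Gaussian
vector `(A, B, U, V)` with `Var U = Var V = 1` (see `gaussian_ibp`), together with size bounds on
the covariances: those of `(A, B)` are at most `L²`, all others at most `1`, and
`Cov(A, U) + 1/2`, `Cov(B, V) + 1/2`, `Cov(A, V)`, `Cov(B, U)` are at most `δ`, all in absolute value; here
`ρ = Cov(U, V)`. A truncated subtraction only occurs next to a vanishing factor. -/
structure WickRec (M : ℕ → ℕ → ℕ → ℕ → ℝ) (vA vB cAB cAU cAV cBU cBV ρ L δ : ℝ) : Prop where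
  zero : M 0 0 0 0 = 1
  recA : ∀ a b : ℕ, M (a + 1) b 0 0 = a * vA * M (a - 1) b 0 0 + b * cAB * M a (b - 1) 0 0
  recB : ∀ b : ℕ, M 0 (b + 1) 0 0 = b * vB * M 0 (b - 1) 0 0
  recU : ∀ a b p r : ℕ, M a b (p + 1) r =
    a * cAU * M (a - 1) b p r + b * cBU * M a (b - 1) p r + r * ρ * M a b p (r - 1)
  recV : ∀ a b r : ℕ, M a b 0 (r + 1) =
    a * cAV * M (a - 1) b 0 r + b * cBV * M a (b - 1) 0 r
  one_le : 1 ≤ L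
  hvA : |vA| ≤ L ^ 2
  hvB : |vB| ≤ L ^ 2
  hcAB : |cAB| ≤ L ^ 2
  hcAU : |cAU| ≤ 1
  hcAV : |cAV| ≤ 1
  hcBU : |cBU| ≤ 1
  hcBV : |cBV| ≤ 1
  hρ : |ρ| ≤ 1
  hAU : |cAU + 1 / 2| ≤ δ
  hBV : |cBV + 1 / 2| ≤ δ
  hAV : |cAV| ≤ δ
  hBU : |cBU| ≤ δ

lemma abs_term_le {a : ℕ} {c m C X : ℝ} (h : a ≠ 0 → |c| * |m| ≤ C) (hX : C ≤ X) :
    |(a : ℝ) * c * m| ≤ a * X := by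
  rcases Nat.eq_zero_or_pos a with rfl | ha
  · simp
  · rw [abs_mul, abs_mul, Nat.abs_cast, mul_assoc]
    exact mul_le_mul_of_nonneg_left ((h ha.ne').trans hX) (Nat.cast_nonneg _)

section
variable {M : ℕ → ℕ → ℕ → ℕ → ℝ} {vA vB cAB cAU cAV cBU cBV ρ L δ : ℝ}

/-- Each factor `A` or `B` costs at most `L`: two of them are contracted at cost `L²`, and one of
them with `U` or `V` at cost `1 ≤ L`. -/
lemma WickRec.crude (h : WickRec M vA vB cAB cAU cAV cBU cBV ρ L δ) (N : ℕ) :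
    ∀ a b p r : ℕ, a + b + p + r ≤ N → |M a b p r| ≤ N.factorial * L ^ (a + b) := by
  have hL := h.one_le
  have hL0 : 0 < L := by linarith
  induction N with
  | zero =>
    intro a b p r hN
    obtain rfl : a = 0 := by omega
    obtain rfl : b = 0 := by omega
    obtain rfl : p = 0 := by omega
    obtain rfl : r = 0 := by omega
    simp [h.zero]
  | succ N ih =>
    intro a b p r hN
    -- a term with a bounded covariance
    have T : ∀ (x : ℝ) (a' b' p' r' : ℕ), |x| ≤ 1 → a' + b' + p' + r' ≤ N → a' + b' ≤ a + b →
        |x| * |M a' b' p' r'| ≤ N.factorial * L ^ (a + b) := by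
      intro x a' b' p' r' hx h1 h2
      calc |x| * |M a' b' p' r'| ≤ 1 * (N.factorial * L ^ (a' + b')) :=
            mul_le_mul hx (ih _ _ _ _ h1) (abs_nonneg _) zero_le_one
        _ ≤ N.factorial * L ^ (a + b) := by
            rw [one_mul]; gcongr
    -- a term contracting two factors among `A`, `B`
    have S : ∀ (x : ℝ) (a' b' p' r' : ℕ), |x| ≤ L ^ 2 → a' + b' + p' + r' ≤ N →
        a' + b' + 2 = a + b → |x| * |M a' b' p' r'| ≤ N.factorial * L ^ (a + b) := by
      intro x a' b' p' r' hx h1 h2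
      calc |x| * |M a' b' p' r'| ≤ L ^ 2 * (N.factorial * L ^ (a' + b')) :=
            mul_le_mul hx (ih _ _ _ _ h1) (abs_nonneg _) (by positivity)
        _ = N.factorial * L ^ (a + b) := by rw [← h2, pow_add]; ring
    have hX : 0 ≤ (N.factorial : ℝ) * L ^ (a + b) := by positivity
    have fin : ∀ (i j k : ℕ), i + j + k ≤ N + 1 →
        (i : ℝ) * (N.factorial * L ^ (a + b)) + j * (N.factorial * L ^ (a + b)) +
          k * (N.factorial * L ^ (a + b)) ≤ (N + 1).factorial * L ^ (a + b) := by
      intro i j k hijk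
      have : ((i : ℝ) + j + k) ≤ N + 1 := by exact_mod_cast hijk
      rw [Nat.factorial_succ]; push_cast
      nlinarith
    rcases p with _ | p
    · rcases r with _ | r
      · rcases a with _ | a
        · rcases b with _ | b
          · have := ih 0 0 0 0 (by omega)
            refine this.trans ?_
            gcongr
            exact Nat.le_succ N
          · rw [h.recB]
            refine (abs_term_le (fun hb => S vB 0 (b - 1) 0 0 h.hvB (by omega) (by omega))
              le_rfl).trans ?_
            have := fin b 0 0 (by omega)
            simpa using this
        · rw [h.recA]
          refine (abs_add_le _ _).trans ?_
          refine (add_le_add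
            (abs_term_le (fun hb => S vA (a - 1) b 0 0 h.hvA (by omega) (by omega)) le_rfl)
            (abs_term_le (fun hb => S cAB a (b - 1) 0 0 h.hcAB (by omega) (by omega))
              le_rfl)).trans ?_
          have := fin a b 0 (by omega)
          simpa using this
      · rw [h.recV]
        refine (abs_add_le _ _).trans ?_
        refine (add_le_add
          (abs_term_le (fun hb => T cAV (a - 1) b 0 r h.hcAV (by omega) (by omega)) le_rfl)
          (abs_term_le (fun hb => T cBV a (b - 1) 0 r h.hcBV (by omega) (by omega))
            le_rfl)).trans ?_
        have := fin a b 0 (by omega)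
        simpa using this
    · rw [h.recU]
      refine (abs_add_le _ _).trans ((add_le_add (abs_add_le _ _) le_rfl).trans ?_)
      refine (add_le_add (add_le_add
        (abs_term_le (fun hb => T cAU (a - 1) b p r h.hcAU (by omega) (by omega)) le_rfl)
        (abs_term_le (fun hb => T cBU a (b - 1) p r h.hcBU (by omega) (by omega)) le_rfl))
        (abs_term_le (fun hb => T ρ a b p (r - 1) h.hρ (by omega) (by omega)) le_rfl)).trans ?_
      exact fin a b r (by omega)

/-- A contraction of `U` with `V` produces an error term. -/
lemma WickRec.rho_term (h : WickRec M vA vB cAB cAU cAV cBU cBV ρ L δ) {D a b p r : ℕ}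
    (h1 : a + b ≤ D) (h2 : p + r ≤ D) :
    |ρ| * |M a b p r| ≤ (2 * D).factorial * (|ρ| * L ^ D) := by
  have hL := h.one_le
  calc |ρ| * |M a b p r| ≤ |ρ| * ((2 * D).factorial * L ^ D) := by
        gcongr
        refine (h.crude (2 * D) a b p r (by omega)).trans ?_
        gcongr
    _ = _ := by ring

/-- When the degrees balance, `a + b = p + r`, either all contractions pair `A, B` with `U, V`,
or there is a factor `ρ`. -/
lemma WickRec.balanced (h : WickRec M vA vB cAB cAU cAV cBU cBV ρ L δ) (D N : ℕ) :
    ∀ a b p r : ℕ, a + b = N → p + r = N → N ≤ D →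
      |M a b p r| ≤ (2 * N).factorial * ((2 * D).factorial * (1 + |ρ| * L ^ D)) := by
  have hL := h.one_le
  have hE : 0 ≤ |ρ| * L ^ D := by positivity
  induction N with
  | zero =>
    intro a b p r h1 h2 _
    obtain rfl : a = 0 := by omega
    obtain rfl : b = 0 := by omega
    obtain rfl : p = 0 := by omega
    obtain rfl : r = 0 := by omega
    have h1 : (1 : ℝ) ≤ (2 * D).factorial := by exact_mod_cast Nat.one_le_iff_ne_zero.2 (2 * D).factorial_ne_zero
    simp only [h.zero, abs_one, mul_zero, Nat.factorial_zero, Nat.cast_one, one_mul]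
    nlinarith
  | succ N ih =>
    intro a b p r h1 h2 hD
    set X : ℝ := (2 * N).factorial * ((2 * D).factorial * (1 + |ρ| * L ^ D)) with hX
    have hX0 : 0 ≤ X := by positivity
    have T : ∀ (x : ℝ) (a' b' p' r' : ℕ), |x| ≤ 1 → a' + b' = N → p' + r' = N →
        |x| * |M a' b' p' r'| ≤ X := by
      intro x a' b' p' r' hx h1 h2
      calc |x| * |M a' b' p' r'| ≤ 1 * X :=
            mul_le_mul hx (ih _ _ _ _ h1 h2 (by omega)) (abs_nonneg _) zero_le_one
        _ = X := one_mul _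
    have R : ((2 * D).factorial : ℝ) * (|ρ| * L ^ D) ≤ X := by
      have h1 : (1 : ℝ) ≤ (2 * N).factorial := by exact_mod_cast Nat.one_le_iff_ne_zero.2 (2 * N).factorial_ne_zero
      calc ((2 * D).factorial : ℝ) * (|ρ| * L ^ D) ≤ (2 * D).factorial * (1 + |ρ| * L ^ D) := by
            gcongr; linarith
        _ ≤ X := le_mul_of_one_le_left (by positivity) h1
    have fin : ∀ (i j k : ℕ), i + j ≤ N + 1 → k ≤ N →
        (i : ℝ) * X + j * X + k * X ≤
          (2 * (N + 1)).factorial * ((2 * D).factorial * (1 + |ρ| * L ^ D)) := by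
      intro i j k hij hk
      have h1 : ((i : ℝ) + j + k) ≤ 2 * N + 1 := by exact_mod_cast (by omega : i + j + k ≤ 2 * N + 1)
      have : (((2 * (N + 1)).factorial : ℕ) : ℝ) = (2 * N + 2) * ((2 * N + 1) * (2 * N).factorial) := by
        rw [show 2 * (N + 1) = (2 * N + 1) + 1 by ring, Nat.factorial_succ, Nat.factorial_succ]
        push_cast; ring
      rw [this]
      have h2 : ((2 * (N : ℝ) + 2) * ((2 * N + 1) * (2 * N).factorial)) *
          ((2 * D).factorial * (1 + |ρ| * L ^ D)) = (2 * N + 2) * ((2 * N + 1) * X) := by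
        rw [hX]; ring
      rw [h2]
      have h3 : (0 : ℝ) ≤ (2 * N + 1) * X := by positivity
      have h4 : (0 : ℝ) ≤ N := Nat.cast_nonneg _
      nlinarith
    rcases p with _ | p
    · rcases r with _ | r
      · omega
      · rw [h.recV]
        refine (abs_add_le _ _).trans ?_
        refine (add_le_add
          (abs_term_le (fun hb => T cAV (a - 1) b 0 r h.hcAV (by omega) (by omega)) le_rfl)
          (abs_term_le (fun hb => T cBV a (b - 1) 0 r h.hcBV (by omega) (by omega))
            le_rfl)).trans ?_
        have := fin a b 0 (by omega) (by omega)
        simpa using this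
    · rw [h.recU]
      refine (abs_add_le _ _).trans ((add_le_add (abs_add_le _ _) le_rfl).trans ?_)
      refine (add_le_add (add_le_add
        (abs_term_le (fun hb => T cAU (a - 1) b p r h.hcAU (by omega) (by omega)) le_rfl)
        (abs_term_le (fun hb => T cBU a (b - 1) p r h.hcBU (by omega) (by omega)) le_rfl))
        (abs_term_le (fun hb => (h.rho_term (by omega) (by omega)).trans R) le_rfl)).trans ?_
      exact fin a b r (by omega) (by omega)

end

/-- The dominant contraction pairs all `A` with `U` and all `B` with `V`, and contributes
`a! b! (-1/2)^(a+b)` up to an error controlled by `δ` and `ρ`. -/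
lemma WickRec.aligned (D : ℕ) : ∀ a b : ℕ, a + b ≤ D → ∃ C : ℝ, 0 ≤ C ∧
    ∀ (M : ℕ → ℕ → ℕ → ℕ → ℝ) (vA vB cAB cAU cAV cBU cBV ρ L δ : ℝ),
      WickRec M vA vB cAB cAU cAV cBU cBV ρ L δ →
      |M a b a b - a.factorial * b.factorial * (-1 / 2) ^ (a + b)| ≤
        C * (δ + |ρ| * L ^ D) := by
  -- the induction step, for a main term with coefficient `x ≈ -1/2` and two error terms
  have step : ∀ (i : ℕ) (K C : ℝ), 0 ≤ K → 0 ≤ C → ∃ C' : ℝ, 0 ≤ C' ∧ ∀ x m t y E δ : ℝ,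
      0 ≤ E → |x| ≤ 1 → |x + 1 / 2| ≤ δ → |m| ≤ K * (1 + E) → |m - t| ≤ C * (δ + E) →
      |y| ≤ K * (δ + E) → |(i : ℝ) * x * m + y - (i * t) * (-1 / 2)| ≤ C' * (δ + E) := by
    intro i K C hK hC
    refine ⟨i * (2 * K) + i * C + K, by positivity, ?_⟩
    intro x m t y E δ hE hx hx2 hm hmt hy
    have hδ : 0 ≤ δ := (abs_nonneg _).trans hx2
    have hx3 : |x + 1 / 2| ≤ 2 := by
      rw [abs_le] at *; constructor <;> linarith
    have e1 : |x + 1 / 2| * |m| ≤ 2 * K * (δ + E) := by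
      calc |x + 1 / 2| * |m| ≤ |x + 1 / 2| * (K * (1 + E)) := by gcongr
        _ = K * (|x + 1 / 2| + |x + 1 / 2| * E) := by ring
        _ ≤ K * (δ + 2 * E) := by gcongr
        _ ≤ 2 * K * (δ + E) := by nlinarith
    have e2 : (i : ℝ) * x * m + y - (i * t) * (-1 / 2) =
        i * ((x + 1 / 2) * m) + i * ((-1 / 2) * (m - t)) + y := by ring
    rw [e2]
    have e3 : |(i : ℝ) * ((x + 1 / 2) * m)| ≤ i * (2 * K * (δ + E)) := by
      rw [abs_mul, Nat.abs_cast, abs_mul]; gcongr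
    have e4 : |(i : ℝ) * ((-1 / 2) * (m - t))| ≤ i * (C * (δ + E)) := by
      rw [abs_mul, Nat.abs_cast, abs_mul]
      refine mul_le_mul_of_nonneg_left ?_ (Nat.cast_nonneg _)
      have : |(-1 / 2 : ℝ)| ≤ 1 := by norm_num [abs_le]
      calc |(-1 / 2 : ℝ)| * |m - t| ≤ 1 * |m - t| := by gcongr
        _ ≤ _ := by rw [one_mul]; exact hmt
    refine (abs_add_le _ _).trans ((add_le_add (abs_add_le _ _) le_rfl).trans ?_)
    calc _ ≤ i * (2 * K * (δ + E)) + i * (C * (δ + E)) + K * (δ + E) := by gcongr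
      _ = _ := by ring
  intro a
  induction a with
  | zero =>
    intro b
    induction b with
    | zero =>
      intro _
      refine ⟨0, le_rfl, ?_⟩
      intro M vA vB cAB cAU cAV cBU cBV ρ L δ h
      simp [h.zero]
    | succ b ih =>
      intro hD
      obtain ⟨C, hC, hM⟩ := ih (by omega)
      obtain ⟨C', hC', hS⟩ := step (b + 1) ((2 * b).factorial * (2 * D).factorial) C
        (by positivity) hC
      refine ⟨C', hC', ?_⟩
      intro M vA vB cAB cAU cAV cBU cBV ρ L δ h
      have hL := h.one_le
      have := hS cBV (M 0 b 0 b) (Nat.factorial 0 * b.factorial * (-1 / 2) ^ (0 + b)) 0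
        (|ρ| * L ^ D) δ (by positivity) h.hcBV h.hBV
        ((h.balanced D b 0 b 0 b (by omega) (by omega) (by omega)).trans (by rw [mul_assoc]))
        (hM _ _ _ _ _ _ _ _ _ _ _ h)
        (by
          have : 0 ≤ δ := (abs_nonneg _).trans h.hBV
          rw [abs_zero]; positivity)
      refine le_of_eq_of_le ?_ this
      rw [h.recV, Nat.factorial_succ]
      congr 1
      push_cast
      simp only [zero_mul, zero_add, pow_succ]
      ring
  | succ a iha =>
    intro b hD
    obtain ⟨C, hC, hM⟩ := iha b (by omega)
    obtain ⟨C', hC', hS⟩ := step (a + 1)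
      ((2 * b + 1) * ((2 * (a + b)).factorial * (2 * D).factorial)) C (by positivity) hC
    refine ⟨C', hC', ?_⟩
    intro M vA vB cAB cAU cAV cBU cBV ρ L δ h
    have hL := h.one_le
    have hδ : 0 ≤ δ := (abs_nonneg _).trans h.hBV
    set E := |ρ| * L ^ D with hE
    have hE0 : 0 ≤ E := by positivity
    set K : ℝ := (2 * (a + b)).factorial * (2 * D).factorial with hK
    have hK0 : 0 ≤ K := by positivity
    have hfac : ((2 * D).factorial : ℝ) ≤ K := by
      apply le_mul_of_one_le_left (by positivity)
      exact_mod_cast Nat.one_le_iff_ne_zero.2 (Nat.factorial_ne_zero _)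
    have t1 : |(b : ℝ) * cBU * M (a + 1) (b - 1) a b| ≤ b * (K * (δ + E)) := by
      refine abs_term_le (C := K * (δ + E)) (fun hb => ?_) le_rfl
      have h1 := h.balanced D (a + b) (a + 1) (b - 1) a b (by omega) (by omega) (by omega)
      rw [← mul_assoc, ← hK, ← hE] at h1
      calc |cBU| * |M (a + 1) (b - 1) a b| ≤ |cBU| * (K * (1 + E)) := by gcongr
        _ = K * (|cBU| + |cBU| * E) := by ring
        _ ≤ K * (δ + 1 * E) := by
          gcongr
          · exact h.hBU
          · exact h.hcBU
        _ = _ := by ring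
    have t2 : |(b : ℝ) * ρ * M (a + 1) b a (b - 1)| ≤ b * (K * (δ + E)) := by
      refine abs_term_le (C := K * (δ + E)) (fun hb => ?_) le_rfl
      refine (h.rho_term (D := D) (by omega) (by omega)).trans ?_
      calc ((2 * D).factorial : ℝ) * (|ρ| * L ^ D) ≤ K * E := by gcongr
        _ ≤ _ := by gcongr; linarith
    have := hS cAU (M a b a b) (a.factorial * b.factorial * (-1 / 2) ^ (a + b))
      (b * cBU * M (a + 1) (b - 1) a b + b * ρ * M (a + 1) b a (b - 1))
      E δ hE0 h.hcAU h.hAU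
      (by
        have h1 := h.balanced D (a + b) a b a b (by omega) (by omega) (by omega)
        rw [← mul_assoc, ← hK, ← hE] at h1
        refine h1.trans ?_
        gcongr
        apply le_mul_of_one_le_left hK0
        have : (0 : ℝ) ≤ b := Nat.cast_nonneg _
        linarith)
      (hM _ _ _ _ _ _ _ _ _ _ _ h)
      (by
        refine (abs_add_le _ _).trans ((add_le_add t1 t2).trans ?_)
        have : 0 ≤ K * (δ + E) := by positivity
        rw [mul_assoc]
        nlinarith)
    refine le_of_eq_of_le ?_ this
    rw [h.recU, Nat.factorial_succ]
    congr 1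
    push_cast
    simp only [show a + 1 + b = (a + b) + 1 by ring, pow_succ]
    ring

/-! ### Mixed moments of powers and Hermite polynomials of a Gaussian vector -/

/-- The Hermite polynomial with real coefficients. -/
def hermR (p : ℕ) : Polynomial ℝ := (Polynomial.hermite p).map (Int.castRingHom ℝ)

lemma Hq_eq_eval (p : ℕ) (t : ℝ) : Hq p t = (hermR p).eval t := by
  rw [Hq, hermR, Polynomial.eval_map, Polynomial.aeval_def]; rfl

lemma hermR_zero : hermR 0 = 1 := by simp [hermR]

lemma hermR_succ' (p : ℕ) :
    hermR (p + 1) = Polynomial.X * hermR p - Polynomial.derivative (hermR p) := by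
  simp [hermR, Polynomial.hermite_succ]

lemma derivative_hermR (p : ℕ) :
    Polynomial.derivative (hermR p) = (p : Polynomial ℝ) * hermR (p - 1) := by
  induction p with
  | zero => simp [hermR]
  | succ p ih =>
    rw [hermR_succ']
    simp only [Polynomial.derivative_sub, Polynomial.derivative_mul, Polynomial.derivative_X]
    rw [ih]
    rcases p with _ | p
    · simp
    · simp only [Nat.add_sub_cancel, Polynomial.derivative_mul, Polynomial.derivative_natCast]
      rw [hermR_succ' p]
      push_cast
      ring

lemma hermR_succ (p : ℕ) :
    hermR (p + 1) = Polynomial.X * hermR p - (p : Polynomial ℝ) * hermR (p - 1) := by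
  rw [hermR_succ', derivative_hermR]

/-- The polynomial `A^a B^b H_p(U) H_r(V)` in the four variables `A, B, U, V`. -/
def wickPoly (a b p r : ℕ) : MvPolynomial (Fin 4) ℝ :=
  MvPolynomial.X 0 ^ a * MvPolynomial.X 1 ^ b *
    Polynomial.aeval (MvPolynomial.X 2) (hermR p) * Polynomial.aeval (MvPolynomial.X 3) (hermR r)

lemma pderiv_wickPoly_zero (a b p r : ℕ) :
    MvPolynomial.pderiv 0 (wickPoly a b p r) = (a : MvPolynomial (Fin 4) ℝ) * wickPoly (a - 1) b p r := by
  simp only [wickPoly, Derivation.leibniz, Derivation.leibniz_pow, Derivation.map_aeval,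
    MvPolynomial.pderiv_X, smul_eq_mul, Pi.single_apply]
  simp; ring

lemma pderiv_wickPoly_one (a b p r : ℕ) :
    MvPolynomial.pderiv 1 (wickPoly a b p r) = (b : MvPolynomial (Fin 4) ℝ) * wickPoly a (b - 1) p r := by
  simp only [wickPoly, Derivation.leibniz, Derivation.leibniz_pow, Derivation.map_aeval,
    MvPolynomial.pderiv_X, smul_eq_mul, Pi.single_apply]
  simp; ring

lemma pderiv_wickPoly_two (a b p r : ℕ) :
    MvPolynomial.pderiv 2 (wickPoly a b p r) = (p : MvPolynomial (Fin 4) ℝ) * wickPoly a b (p - 1) r := by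
  simp only [wickPoly, Derivation.leibniz, Derivation.leibniz_pow, Derivation.map_aeval,
    MvPolynomial.pderiv_X, smul_eq_mul, Pi.single_apply, derivative_hermR]
  simp; ring

lemma pderiv_wickPoly_three (a b p r : ℕ) :
    MvPolynomial.pderiv 3 (wickPoly a b p r) = (r : MvPolynomial (Fin 4) ℝ) * wickPoly a b p (r - 1) := by
  simp only [wickPoly, Derivation.leibniz, Derivation.leibniz_pow, Derivation.map_aeval,
    MvPolynomial.pderiv_X, smul_eq_mul, Pi.single_apply, derivative_hermR]
  simp; ring

lemma wickPoly_succ_two (a b p r : ℕ) : wickPoly a b (p + 1) r =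
    MvPolynomial.X 2 * wickPoly a b p r -
      (p : MvPolynomial (Fin 4) ℝ) * wickPoly a b (p - 1) r := by
  simp only [wickPoly, hermR_succ p, map_sub, map_mul, Polynomial.aeval_X, map_natCast]
  ring

lemma wickPoly_succ_three (a b p r : ℕ) : wickPoly a b p (r + 1) =
    MvPolynomial.X 3 * wickPoly a b p r -
      (r : MvPolynomial (Fin 4) ℝ) * wickPoly a b p (r - 1) := by
  simp only [wickPoly, hermR_succ r, map_sub, map_mul, Polynomial.aeval_X, map_natCast]
  ring

lemma aeval_wickPoly (z : Fin 4 → ℝ) (a b p r : ℕ) :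
    MvPolynomial.aeval z (wickPoly a b p r) = z 0 ^ a * z 1 ^ b * Hq p (z 2) * Hq r (z 3) := by
  simp only [wickPoly, map_mul, map_pow, MvPolynomial.aeval_X, Hq_eq_eval,
    ← Polynomial.aeval_algHom_apply, Polynomial.coe_aeval_eq_eval]

/-- The mixed moments `E[A^a B^b H_p(U) H_r(V)]`, where `Z = (A, B, U, V)`. -/
def wickM (P : Measure Ω) (Z : Fin 4 → Ω → ℝ) (a b p r : ℕ) : ℝ :=
  ∫ ω, MvPolynomial.aeval (fun i => Z i ω) (wickPoly a b p r) ∂P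

section
variable {P : Measure Ω} [IsProbabilityMeasure P] {Z : Fin 4 → Ω → ℝ}

lemma lpAll_wick (hZ : HasGaussianLaw (fun ω i => Z i ω) P) (p : MvPolynomial (Fin 4) ℝ) :
    LpAll P (fun ω => MvPolynomial.aeval (fun i => Z i ω) p) :=
  LpAll.aeval (fun i => hasGaussianLaw_lpAll (hZ.eval i)) p

/-- Gaussian integration by parts for the mixed moments. -/
lemma wick_ibp (hZ : HasGaussianLaw (fun ω i => Z i ω) P) (h0 : ∀ i, ∫ ω, Z i ω ∂P = 0)
    (i : Fin 4) (a b p r : ℕ) :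
    ∫ ω, MvPolynomial.aeval (fun i => Z i ω) (MvPolynomial.X i * wickPoly a b p r) ∂P =
      a * cov[Z i, Z 0; P] * wickM P Z (a - 1) b p r +
      b * cov[Z i, Z 1; P] * wickM P Z a (b - 1) p r +
      p * cov[Z i, Z 2; P] * wickM P Z a b (p - 1) r +
      r * cov[Z i, Z 3; P] * wickM P Z a b p (r - 1) := by
  have := gaussian_ibp hZ h0 i (wickPoly a b p r)
  simp only [map_mul, MvPolynomial.aeval_X]
  rw [this, Fin.sum_univ_four, pderiv_wickPoly_zero, pderiv_wickPoly_one, pderiv_wickPoly_two,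
    pderiv_wickPoly_three]
  simp only [map_mul, map_natCast, integral_const_mul, wickM]
  ring

lemma wickM_sub (hZ : HasGaussianLaw (fun ω i => Z i ω) P) (u v : MvPolynomial (Fin 4) ℝ) (k : ℕ) :
    ∫ ω, MvPolynomial.aeval (fun i => Z i ω) (u - (k : MvPolynomial (Fin 4) ℝ) * v) ∂P =
      ∫ ω, MvPolynomial.aeval (fun i => Z i ω) u ∂P -
        k * ∫ ω, MvPolynomial.aeval (fun i => Z i ω) v ∂P := by
  simp only [map_sub, map_mul, map_natCast]
  rw [integral_sub (lpAll_wick hZ u).integrable ((lpAll_wick hZ v).integrable.const_mul _),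
    integral_const_mul]

/-- The recursion holds for the moments of a Gaussian vector, since the term `-p H_{p-1}` of
`H_{p+1} = X H_p - p H_{p-1}` cancels the contractions of `U` with itself, and likewise for `V`. -/
lemma wickRec_wickM (hZ : HasGaussianLaw (fun ω i => Z i ω) P) (h0 : ∀ i, ∫ ω, Z i ω ∂P = 0)
    (hU : cov[Z 2, Z 2; P] = 1) (hV : cov[Z 3, Z 3; P] = 1) {L δ : ℝ}
    (one_le : 1 ≤ L)
    (hvA : |cov[Z 0, Z 0; P]| ≤ L ^ 2) (hvB : |cov[Z 1, Z 1; P]| ≤ L ^ 2)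
    (hcAB : |cov[Z 0, Z 1; P]| ≤ L ^ 2)
    (hcAU : |cov[Z 2, Z 0; P]| ≤ 1) (hcAV : |cov[Z 3, Z 0; P]| ≤ 1)
    (hcBU : |cov[Z 2, Z 1; P]| ≤ 1) (hcBV : |cov[Z 3, Z 1; P]| ≤ 1)
    (hρ : |cov[Z 2, Z 3; P]| ≤ 1)
    (hAU : |cov[Z 2, Z 0; P] + 1 / 2| ≤ δ) (hBV : |cov[Z 3, Z 1; P] + 1 / 2| ≤ δ)
    (hAV : |cov[Z 3, Z 0; P]| ≤ δ) (hBU : |cov[Z 2, Z 1; P]| ≤ δ) :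
    WickRec (wickM P Z) (cov[Z 0, Z 0; P]) (cov[Z 1, Z 1; P]) (cov[Z 0, Z 1; P])
      (cov[Z 2, Z 0; P]) (cov[Z 3, Z 0; P]) (cov[Z 2, Z 1; P]) (cov[Z 3, Z 1; P])
      (cov[Z 2, Z 3; P]) L δ where
  zero := by simp [wickM, wickPoly, hermR_zero]
  recA a b := by
    have := wick_ibp hZ h0 0 a b 0 0
    rw [show MvPolynomial.X 0 * wickPoly a b 0 0 = wickPoly (a + 1) b 0 0 by
      simp only [wickPoly]; ring] at this
    rw [wickM, this]; simp
  recB b := by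
    have := wick_ibp hZ h0 1 0 b 0 0
    rw [show MvPolynomial.X 1 * wickPoly 0 b 0 0 = wickPoly 0 (b + 1) 0 0 by
      simp only [wickPoly]; ring] at this
    rw [wickM, this]; simp
  recU a b p r := by
    rw [wickM, wickPoly_succ_two, wickM_sub hZ, wick_ibp hZ h0, hU]
    simp only [wickM]; ring
  recV a b r := by
    rw [wickM, wickPoly_succ_three, wickM_sub hZ, wick_ibp hZ h0, hV]
    simp only [wickM]; simp
  one_le := one_le
  hvA := hvA
  hvB := hvB
  hcAB := hcAB
  hcAU := hcAU
  hcAV := hcAV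
  hcBU := hcBU
  hcBV := hcBV
  hρ := hρ
  hAU := hAU
  hBV := hBV
  hAV := hAV
  hBU := hBU

end

/-! ### The Gaussian structure of fractional Brownian motion -/

section
variable {P : Measure Ω} {ν : ℝ} {x : ℝ → Ω → ℝ}

lemma IsFBM.gaussian (hx : IsFBM P ν x) {m : ℕ} (t : Fin m → ℝ)
    (ht : ∀ i, t i ∈ Set.Icc (0 : ℝ) 1) : HasGaussianLaw (fun ω i => x (t i) ω) P := by
  have hm : Measurable (fun ω i => x (t i) ω) := measurable_pi_lambda _ fun i => hx.1 (t i)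
  refine ⟨isGaussian_of_map_eq_gaussianReal fun L => ⟨0, (∑ j, ∑ k, L (Pi.single j 1) *
    L (Pi.single k 1) * fbmCov ν (t j) (t k)).toNNReal, ?_⟩⟩
  · rw [Measure.map_map (by fun_prop) hm]
    have : (L ∘ fun ω i => x (t i) ω) = fun ω => ∑ i, L (Pi.single i 1) * x (t i) ω := by
      funext ω
      have := L.toLinearMap.pi_apply_eq_sum_univ (fun i => x (t i) ω)
      simp only [Function.comp_apply]
      refine this.trans ?_
      refine Finset.sum_congr rfl fun i _ => ?_
      rw [smul_eq_mul, mul_comm]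
      congr 1
      refine congrArg L ?_
      funext j
      simp [Pi.single_apply, eq_comm]
    rw [this]
    exact hx.2.2 m t ht _

lemma IsFBM.mean (hx : IsFBM P ν x) {s : ℝ} (hs : s ∈ Set.Icc (0 : ℝ) 1) :
    ∫ ω, x s ω ∂P = 0 := by
  have h := hx.2.2 1 (fun _ => s) (fun _ => hs) (fun _ => 1)
  simp only [Finset.univ_unique, Finset.sum_const, Finset.card_singleton, one_smul, one_mul] at h
  have h2 := integral_map (μ := P) (hx.1 s).aemeasurable (f := fun y => y)
    (by fun_prop)
  rw [← h2, h, integral_id_gaussianReal]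

/-- The variance of a two-point linear combination, as long as it comes out nonnegative. -/
lemma IsFBM.var_comb (hx : IsFBM P ν x) {s t : ℝ} (hs : s ∈ Set.Icc (0 : ℝ) 1)
    (ht : t ∈ Set.Icc (0 : ℝ) 1) (a b v : ℝ) (hv : 0 ≤ v)
    (h : a * a * fbmCov ν s s + a * b * fbmCov ν s t + (b * a * fbmCov ν t s +
      b * b * fbmCov ν t t) = v) :
    Var[fun ω => a * x s ω + b * x t ω; P] = v := by
  have h1 := hx.2.2 2 ![s, t] (by intro j; fin_cases j <;> assumption) ![a, b]
  simp only [Fin.sum_univ_two, Matrix.cons_val_zero, Matrix.cons_val_one, h] at h1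
  have hms := hx.1 s
  have hmt := hx.1 t
  have hm : AEMeasurable (fun ω => a * x s ω + b * x t ω) P := by fun_prop
  rw [← variance_id_map hm, h1, variance_id_gaussianReal, Real.coe_toNNReal _ hv]

lemma IsFBM.memLp (hx : IsFBM P ν x) {s : ℝ} (hs : s ∈ Set.Icc (0 : ℝ) 1) :
    MemLp (x s) 2 P :=
  ((hx.gaussian (fun _ : Fin 1 => s) fun _ => hs).eval 0).memLp_two

lemma IsFBM.cov [IsProbabilityMeasure P] (hν : 0 < ν) (hx : IsFBM P ν x) {s t : ℝ} (hs : s ∈ Set.Icc (0 : ℝ) 1)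
    (ht : t ∈ Set.Icc (0 : ℝ) 1) : cov[x s, x t; P] = fbmCov ν s t := by
  have h0 : (0 : ℝ) ^ (2 * ν) = 0 := Real.zero_rpow (by positivity)
  have e1 : Var[x s; P] = s ^ (2 * ν) := by
    have := hx.var_comb hs hs 1 0 (s ^ (2 * ν)) (Real.rpow_nonneg hs.1 _)
      (by simp [fbmCov, h0])
    simpa using this
  have e2 : Var[x t; P] = t ^ (2 * ν) := by
    have := hx.var_comb ht ht 1 0 (t ^ (2 * ν)) (Real.rpow_nonneg ht.1 _)
      (by simp [fbmCov, h0])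
    simpa using this
  have e3 : Var[fun ω => x t ω - x s ω; P] = |t - s| ^ (2 * ν) := by
    have := hx.var_comb ht hs 1 (-1) (|t - s| ^ (2 * ν)) (Real.rpow_nonneg (abs_nonneg _) _)
      (by simp only [fbmCov, sub_self, abs_zero, h0, abs_sub_comm s t]; ring)
    rw [← this]
    congr 1
    funext ω; ring
  have e4 := variance_fun_sub (hx.memLp ht) (hx.memLp hs)
  rw [e3, e2, e1, covariance_comm] at e4
  rw [fbmCov]; linarith

/-- The increment `n^ν (x_{i/n} - x_{j/n})`; its law does not depend on `n`. -/
def inc (x : ℝ → Ω → ℝ) (ν : ℝ) (n i j : ℕ) (ω : Ω) : ℝ :=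
  (n : ℝ) ^ ν * (x ((i : ℝ) / n) ω - x ((j : ℝ) / n) ω)

/-- `φ(z) = |z|^{2ν}`, the variance of an increment of fBm over a time span `z`. -/
def phi (ν z : ℝ) : ℝ := |z| ^ (2 * ν)

lemma grid_mem {n i : ℕ} (hn : 0 < n) (hi : i ≤ n) : (i : ℝ) / n ∈ Set.Icc (0 : ℝ) 1 := by
  refine ⟨by positivity, ?_⟩
  rw [div_le_one (by positivity)]
  exact_mod_cast hi

lemma cov_inc [IsProbabilityMeasure P] (hν : 0 < ν) (hx : IsFBM P ν x) {n i j k l : ℕ} (hn : 0 < n) (hi : i ≤ n)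
    (hj : j ≤ n) (hk : k ≤ n) (hl : l ≤ n) :
    cov[inc x ν n i j, inc x ν n k l; P] =
      (phi ν (i - l) + phi ν (j - k) - phi ν (i - k) - phi ν (j - l)) / 2 := by
  have mi := grid_mem hn hi
  have mj := grid_mem hn hj
  have mk := grid_mem hn hk
  have ml := grid_mem hn hl
  have hn' : (0 : ℝ) < n := by exact_mod_cast hn
  have hs : ∀ a b : ℕ, |(b : ℝ) / n - a / n| ^ (2 * ν) * ((n : ℝ) ^ ν * (n : ℝ) ^ ν) =
      phi ν (a - b) := by
    intro a b
    rw [← Real.rpow_add hn', ← two_mul, ← Real.mul_rpow (abs_nonneg _) hn'.le, phi,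
      abs_sub_comm (a : ℝ) b]
    congr 1
    rw [← sub_div, abs_div, Nat.abs_cast, div_mul_cancel₀ _ hn'.ne']
  unfold inc
  rw [covariance_const_mul_left, covariance_const_mul_right,
    covariance_fun_sub_fun_sub (hx.memLp mi) (hx.memLp mj) (hx.memLp mk) (hx.memLp ml),
    hx.cov hν mi mk, hx.cov hν mi ml, hx.cov hν mj mk, hx.cov hν mj ml]
  rw [← hs i l, ← hs j k, ← hs i k, ← hs j l]
  simp only [fbmCov]
  ring

lemma gaussian_inc (hx : IsFBM P ν x) {n m : ℕ} (hn : 0 < n) (I J : Fin m → ℕ)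
    (hI : ∀ i, I i ≤ n) (hJ : ∀ i, J i ≤ n) :
    HasGaussianLaw (fun ω i => inc x ν n (I i) (J i) ω) P := by
  have h := hx.gaussian (Fin.append (fun i => (I i : ℝ) / n) (fun i => (J i : ℝ) / n))
    (by
      intro i
      refine Fin.addCases (fun i => ?_) (fun i => ?_) i
      · rw [Fin.append_left]; exact grid_mem hn (hI i)
      · rw [Fin.append_right]; exact grid_mem hn (hJ i))
  let L : (Fin (m + m) → ℝ) →L[ℝ] (Fin m → ℝ) :=
    ContinuousLinearMap.pi fun i => ((n : ℝ) ^ ν) •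
      (ContinuousLinearMap.proj (R := ℝ) (φ := fun _ => ℝ) (Fin.castAdd m i) -
        ContinuousLinearMap.proj (R := ℝ) (φ := fun _ => ℝ) (Fin.natAdd m i))
  have h2 := h.map_fun L
  have e : (fun ω i => inc x ν n (I i) (J i) ω) = fun ω => L fun i =>
      x (Fin.append (fun i => (I i : ℝ) / n) (fun i => (J i : ℝ) / n) i) ω := by
    funext ω i
    simp [L, inc, -Fin.natAdd_eq_addNat]
  rw [e]
  exact h2

lemma mean_inc [IsProbabilityMeasure P] (hx : IsFBM P ν x) {n i j : ℕ} (hn : 0 < n) (hi : i ≤ n) (hj : j ≤ n) :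
    ∫ ω, inc x ν n i j ω ∂P = 0 := by
  have mi := grid_mem hn hi
  have mj := grid_mem hn hj
  unfold inc
  rw [integral_const_mul, integral_sub ((hx.memLp mi).integrable (by simp))
    ((hx.memLp mj).integrable (by simp)), hx.mean mi, hx.mean mj]
  simp

end

/-! ### Increments of the variance function -/

/-- `D(w) = |φ(w) - φ(w - 1)|`: it decreases from `D(0) = D(1) = 1` and controls all
correlations of increments at distance `w`. -/
def dd (ν : ℝ) (w : ℕ) : ℝ := |phi ν w - phi ν (w - 1)|

/-- The distance between two grid indices. -/
def gd (i j : ℕ) : ℕ := ((i : ℤ) - j).natAbs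

/-- The correlation of two unit increments of fBm at distance `z`. -/
def rr (ν : ℝ) (z : ℕ) : ℝ := (phi ν (z + 1) + phi ν (z - 1) - 2 * phi ν z) / 2

section
variable {ν : ℝ}

lemma phi_zero (hν : 0 < ν) : phi ν 0 = 0 := by
  rw [phi, abs_zero, Real.zero_rpow (by positivity)]

lemma phi_one : phi ν 1 = 1 := by simp [phi]

lemma phi_neg (z : ℝ) : phi ν (-z) = phi ν z := by rw [phi, abs_neg, phi]

lemma phi_nonneg (z : ℝ) : 0 ≤ phi ν z := Real.rpow_nonneg (abs_nonneg _) _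

lemma phi_mono (hν : 0 < ν) {a b : ℝ} (ha : 0 ≤ a) (hab : a ≤ b) : phi ν a ≤ phi ν b := by
  rw [phi, phi, abs_of_nonneg ha, abs_of_nonneg (ha.trans hab)]
  exact Real.rpow_le_rpow ha hab (by positivity)

lemma phi_concave (hν : 0 < ν) (hν2 : ν < 1 / 2) {w : ℝ} (hw : 1 ≤ w) :
    phi ν (w + 1) - phi ν w ≤ phi ν w - phi ν (w - 1) := by
  have hc : ConcaveOn ℝ (Set.Ici (0 : ℝ)) fun x : ℝ => x ^ (2 * ν) :=
    Real.concaveOn_rpow (by linarith) (by linarith)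
  have h := hc.2 (show w + 1 ∈ Set.Ici (0 : ℝ) by simp; linarith)
    (show w - 1 ∈ Set.Ici (0 : ℝ) by simp; linarith)
    (show (0 : ℝ) ≤ 1 / 2 by norm_num) (show (0 : ℝ) ≤ 1 / 2 by norm_num) (by norm_num)
  simp only [smul_eq_mul] at h
  rw [show 1 / 2 * (w + 1) + 1 / 2 * (w - 1) = w by ring] at h
  simp only [phi]
  rw [abs_of_nonneg (by linarith : 0 ≤ w + 1), abs_of_nonneg (by linarith : 0 ≤ w),
    abs_of_nonneg (by linarith : 0 ≤ w - 1)]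
  linarith

lemma dd_nonneg (w : ℕ) : 0 ≤ dd ν w := abs_nonneg _

lemma dd_zero (hν : 0 < ν) : dd ν 0 = 1 := by
  rw [dd, Nat.cast_zero, phi_zero hν, zero_sub, zero_sub, phi_neg, phi_one]; simp

lemma dd_succ (hν : 0 < ν) (w : ℕ) : dd ν (w + 1) = phi ν (w + 1) - phi ν w := by
  rw [dd]
  push_cast
  rw [add_sub_cancel_right, abs_of_nonneg]
  have := phi_mono hν (Nat.cast_nonneg w) (by linarith : (w : ℝ) ≤ w + 1)
  linarith

lemma dd_anti (hν : 0 < ν) (hν2 : ν < 1 / 2) (w : ℕ) : dd ν (w + 1) ≤ dd ν w := by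
  rcases w with _ | w
  · rw [dd_succ hν, dd_zero hν]
    simp [phi_one, phi_zero hν]
  · rw [dd_succ hν, dd_succ hν]
    have := phi_concave hν hν2 (w := (w : ℝ) + 1) (by linarith [Nat.cast_nonneg (α := ℝ) w])
    push_cast
    simpa using this

lemma dd_le_one (hν : 0 < ν) (hν2 : ν < 1 / 2) (w : ℕ) : dd ν w ≤ 1 := by
  induction w with
  | zero => rw [dd_zero hν]
  | succ w ih => exact (dd_anti hν hν2 w).trans ih

lemma gd_comm (i j : ℕ) : gd i j = gd j i := by unfold gd; omega

lemma abs_phi_succ (hν : 0 < ν) (hν2 : ν < 1 / 2) (i j : ℕ) :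
    |phi ν (i + 1 - j) - phi ν (i - j)| ≤ dd ν (gd i j) := by
  rcases le_total j i with h | h
  · obtain ⟨w, rfl⟩ := Nat.exists_eq_add_of_le h
    have hg : gd (j + w) j = w := by unfold gd; omega
    rw [hg]
    refine le_of_eq_of_le ?_ (dd_anti hν hν2 w)
    rw [dd]
    push_cast
    congr 3 <;> ring
  · obtain ⟨w, rfl⟩ := Nat.exists_eq_add_of_le h
    have hg : gd i (i + w) = w := by unfold gd; omega
    rw [hg, dd, ← phi_neg (i + 1 - _), ← phi_neg (i - _), abs_sub_comm]
    apply le_of_eq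
    push_cast
    congr 3 <;> ring

lemma phi_gd (i j : ℕ) : phi ν (i - j) = phi ν (gd i j) := by
  rw [phi, phi, gd]
  congr 1
  rw [Nat.cast_natAbs]
  simp

lemma rr_gd (i j : ℕ) :
    (phi ν (i + 1 - j) + phi ν (i - (j + 1)) - 2 * phi ν (i - j)) / 2 = rr ν (gd i j) := by
  rw [rr]
  rcases le_total j i with h | h
  · obtain ⟨w, rfl⟩ := Nat.exists_eq_add_of_le h
    have hg : gd (j + w) j = w := by unfold gd; omega
    rw [hg]
    push_cast
    rw [show (j : ℝ) + w + 1 - j = w + 1 by ring, show (j : ℝ) + w - (j + 1) = w - 1 by ring,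
      show (j : ℝ) + w - j = w by ring]
  · obtain ⟨w, rfl⟩ := Nat.exists_eq_add_of_le h
    have hg : gd i (i + w) = w := by unfold gd; omega
    rw [hg, ← phi_neg (i + 1 - _), ← phi_neg (i - (_ + 1)), ← phi_neg (i - _)]
    push_cast
    rw [show -((i : ℝ) + 1 - (i + w)) = w - 1 by ring,
      show -((i : ℝ) - (i + w + 1)) = w + 1 by ring,
      show -((i : ℝ) - (i + w)) = w by ring, add_comm (phi ν ((w : ℝ) - 1))]

lemma rr_zero (hν : 0 < ν) : rr ν 0 = 1 := by
  simp [rr, phi_zero hν, phi_neg, phi_one]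

lemma abs_rr_succ (hν : 0 < ν) (hν2 : ν < 1 / 2) (w : ℕ) :
    |rr ν (w + 1)| = (dd ν (w + 1) - dd ν (w + 2)) / 2 := by
  have h := dd_anti hν hν2 (w + 1)
  rw [abs_of_nonpos]
  · rw [dd_succ hν, dd_succ hν, rr]; push_cast; rw [add_sub_cancel_right]; ring
  · rw [dd_succ hν, dd_succ hν] at h
    rw [rr]
    push_cast at h ⊢
    rw [add_sub_cancel_right]; linarith

lemma abs_rr_le_one (hν : 0 < ν) (hν2 : ν < 1 / 2) (w : ℕ) : |rr ν w| ≤ 1 := by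
  rcases w with _ | w
  · simp [rr_zero hν]
  · rw [abs_rr_succ hν hν2]
    linarith [dd_le_one hν hν2 (w + 1), dd_nonneg (ν := ν) (w + 2)]

lemma sum_dd (hν : 0 < ν) (n : ℕ) :
    ∑ w ∈ Finset.range (n + 1), dd ν w = 1 + (n : ℝ) ^ (2 * ν) := by
  induction n with
  | zero => simp [dd_zero hν, Real.zero_rpow (by positivity : 2 * ν ≠ 0)]
  | succ n ih =>
    rw [Finset.sum_range_succ, ih, dd_succ hν, phi, phi, Nat.abs_cast]
    rw [abs_of_nonneg (by positivity : (0 : ℝ) ≤ (n : ℝ) + 1)]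
    push_cast; ring

lemma sum_abs_rr (hν : 0 < ν) (hν2 : ν < 1 / 2) (n : ℕ) :
    ∑ w ∈ Finset.range (n + 1), |rr ν w| ≤ 2 := by
  have : ∀ n : ℕ, ∑ w ∈ Finset.range (n + 1), |rr ν w| ≤ 2 - dd ν (n + 1) / 2 := by
    intro n
    induction n with
    | zero => simp [rr_zero hν]; linarith [dd_le_one hν hν2 1]
    | succ n ih =>
      rw [Finset.sum_range_succ, abs_rr_succ hν hν2]
      linarith
  linarith [this n, dd_nonneg (ν := ν) (n + 1)]

/-- A sum over grid points of a function of the distance to a fixed point. -/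
lemma sum_gd (f : ℕ → ℝ) (hf : ∀ w, 0 ≤ f w) {n k : ℕ} (hk : k ≤ n) :
    ∑ l ∈ Finset.range n, f (gd l k) ≤ 2 * ∑ w ∈ Finset.range (n + 1), f w := by
  have h : ∀ l ∈ Finset.range n, f (gd l k) ≤
      (if l < k then f (k - l) else 0) + (if k ≤ l then f (l - k) else 0) := by
    intro l _
    by_cases h : l < k
    · rw [if_pos h, if_neg (by omega), add_zero]
      apply le_of_eq; congr 1; unfold gd; omega
    · rw [if_neg h, if_pos (by omega), zero_add]
      apply le_of_eq; congr 1; unfold gd; omega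
  refine (Finset.sum_le_sum h).trans ?_
  rw [Finset.sum_add_distrib, two_mul]
  refine add_le_add ?_ ?_
  · rw [← Finset.sum_filter]
    rw [← Finset.sum_image (f := f) (s := Finset.filter (fun l => l < k) (Finset.range n))
      (g := fun l => k - l)]
    · refine Finset.sum_le_sum_of_subset_of_nonneg ?_ (fun w _ _ => hf w)
      intro w hw
      simp only [Finset.mem_image, Finset.mem_filter, Finset.mem_range] at hw ⊢
      omega
    · intro a ha b hb hab
      simp at ha hb hab
      omega
  · rw [← Finset.sum_filter]
    rw [← Finset.sum_image (f := f) (s := Finset.filter (fun l => k ≤ l) (Finset.range n))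
      (g := fun l => l - k)]
    · refine Finset.sum_le_sum_of_subset_of_nonneg ?_ (fun w _ _ => hf w)
      intro w hw
      simp only [Finset.mem_image, Finset.mem_filter, Finset.mem_range] at hw ⊢
      omega
    · intro a ha b hb hab
      simp at ha hb hab
      omega

end

/-! ### Second moments of the summands -/

/-- The summand `ξ^q H_q(N) / q!`, where `ξ` is the increment between the grid indices `a` and
`k`, and `N` the one between `k` and `k + 1`. -/
def summand (x : ℝ → Ω → ℝ) (ν : ℝ) (n q a k : ℕ) (ω : Ω) : ℝ :=
  inc x ν n k a ω ^ q * Hq q (inc x ν n (k + 1) k ω) / (q.factorial : ℝ)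

/-- The error terms in the correlation of the summands based at `k` and `l`. -/
def errD (ν : ℝ) (k l a c : ℕ) : ℝ :=
  dd ν (gd k l) + dd ν (gd k a) + dd ν (gd l a) + dd ν (gd k c) + dd ν (gd l c)

/-- The endpoints of the four increments `A, B, U, V`. -/
def idxI (k l : ℕ) : Fin 4 → ℕ := ![k, l, k + 1, l + 1]

/-- The starting points of the four increments `A, B, U, V`. -/
def idxJ (k l a c : ℕ) : Fin 4 → ℕ := ![a, c, k, l]

section
variable {P : Measure Ω} [IsProbabilityMeasure P] {ν : ℝ} {x : ℝ → Ω → ℝ}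

/-- Here `A`, `B` are the increments up to `k`, `l` from the base points `a`, `c`, and `U`, `V` are
the unit increments after `k`, `l`. The limit `-1/2` is the correlation of `U` with the far past:
`Cov(A, U) = (φ(k + 1 - a) - φ(k - a) - 1) / 2`. -/
lemma wickRec_fbm (hν : 0 < ν) (hν2 : ν < 1 / 2) (hx : IsFBM P ν x) {n k l a c : ℕ} (hk : k < n)
    (hl : l < n) (ha : a ≤ n) (hc : c ≤ n) {L : ℝ} (hL : 1 ≤ L) (hLa : phi ν (k - a) ≤ L ^ 2)
    (hLc : phi ν (l - c) ≤ L ^ 2) :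
    ∃ vA vB cAB cAU cAV cBU cBV : ℝ,
      WickRec (wickM P fun i => inc x ν n (idxI k l i) (idxJ k l a c i)) vA vB cAB cAU cAV cBU cBV
        (rr ν (gd k l)) L (errD ν k l a c) := by
  have hn : 0 < n := by omega
  have hI : ∀ i, idxI k l i ≤ n := by intro i; fin_cases i <;> simp [idxI] <;> omega
  have hJ : ∀ i, idxJ k l a c i ≤ n := by intro i; fin_cases i <;> simp [idxJ] <;> omega
  set Z : Fin 4 → Ω → ℝ := fun i => inc x ν n (idxI k l i) (idxJ k l a c i) with hZ
  have hG : HasGaussianLaw (fun ω i => Z i ω) P := gaussian_inc hx hn _ _ hI hJ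
  have h0 : ∀ i, ∫ ω, Z i ω ∂P = 0 := fun i => mean_inc hx hn (hI i) (hJ i)
  have hcov : ∀ i j, cov[Z i, Z j; P] = _ := fun i j =>
    cov_inc hν hx hn (hI i) (hJ i) (hI j) (hJ j)
  have p0 := phi_zero hν
  have p1 := phi_one (ν := ν)
  have hgg : ∀ i j : ℕ, |phi ν (i + 1 - j) - phi ν (i - j)| ≤ 1 := fun i j =>
    (abs_phi_succ hν hν2 i j).trans (dd_le_one hν hν2 _)
  have c00 : cov[Z 0, Z 0; P] = phi ν (k - a) := by
    rw [hcov]; simp [idxI, idxJ, p0]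
    rw [← phi_neg ((a : ℝ) - k), neg_sub]; ring
  have c11 : cov[Z 1, Z 1; P] = phi ν (l - c) := by
    rw [hcov]; simp [idxI, idxJ, p0]
    rw [← phi_neg ((c : ℝ) - l), neg_sub]; ring
  have c22 : cov[Z 2, Z 2; P] = 1 := by
    rw [hcov]; simp [idxI, idxJ, p0, phi_neg, p1]
  have c33 : cov[Z 3, Z 3; P] = 1 := by
    rw [hcov]; simp [idxI, idxJ, p0, phi_neg, p1]
  have c20 : cov[Z 2, Z 0; P] = (phi ν (k + 1 - a) - phi ν (k - a) - 1) / 2 := by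
    rw [hcov]; simp [idxI, idxJ, p0, p1]; ring
  have c31 : cov[Z 3, Z 1; P] = (phi ν (l + 1 - c) - phi ν (l - c) - 1) / 2 := by
    rw [hcov]; simp [idxI, idxJ, p0, p1]; ring
  have c30 : cov[Z 3, Z 0; P] = ((phi ν (l + 1 - a) - phi ν (l - a)) -
      (phi ν (l + 1 - k) - phi ν (l - k))) / 2 := by
    rw [hcov]; simp [idxI, idxJ]; ring
  have c21 : cov[Z 2, Z 1; P] = ((phi ν (k + 1 - c) - phi ν (k - c)) -
      (phi ν (k + 1 - l) - phi ν (k - l))) / 2 := by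
    rw [hcov]; simp [idxI, idxJ]; ring
  have c23 : cov[Z 2, Z 3; P] = rr ν (gd k l) := by
    rw [hcov, ← rr_gd]; simp [idxI, idxJ]; ring
  have hvar : ∀ i, cov[Z i, Z i; P] = Var[Z i; P] := fun i =>
    covariance_self (hG.eval i).aemeasurable
  have c01 : |cov[Z 0, Z 1; P]| ≤ L ^ 2 := by
    have e1 := variance_nonneg (fun ω => Z 0 ω + Z 1 ω) P
    have e2 := variance_nonneg (fun ω => Z 0 ω - Z 1 ω) P
    rw [variance_fun_add (hG.eval 0).memLp_two (hG.eval 1).memLp_two, ← hvar, ← hvar, c00, c11]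
      at e1
    rw [variance_fun_sub (hG.eval 0).memLp_two (hG.eval 1).memLp_two, ← hvar, ← hvar, c00, c11]
      at e2
    rw [abs_le]; constructor <;> linarith
  have d0 := fun w => dd_nonneg (ν := ν) w
  have u20 := abs_phi_succ hν hν2 k a
  have u31 := abs_phi_succ hν hν2 l c
  have u30 := abs_phi_succ hν hν2 l a
  have u21 := abs_phi_succ hν hν2 k c
  have ukl := abs_phi_succ hν hν2 k l
  have ulk := abs_phi_succ hν hν2 l k
  rw [gd_comm l k] at ulk
  have d1 := d0 (gd k l)
  have d2 := d0 (gd k a)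
  have d3 := d0 (gd l a)
  have d4 := d0 (gd k c)
  have d5 := d0 (gd l c)
  refine ⟨_, _, _, _, _, _, _, c23 ▸ wickRec_wickM hG h0 c22 c33 hL ?_ ?_ c01 ?_ ?_ ?_ ?_ ?_
    ?_ ?_ ?_ ?_⟩
  · rwa [c00, abs_of_nonneg (phi_nonneg _)]
  · rwa [c11, abs_of_nonneg (phi_nonneg _)]
  · have := abs_le.1 (hgg k a); rw [c20, abs_le]; constructor <;> linarith
  · have h1 := abs_le.1 (hgg l a); have h2 := abs_le.1 (hgg l k)
    rw [c30, abs_le]; constructor <;> linarith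
  · have h1 := abs_le.1 (hgg k c); have h2 := abs_le.1 (hgg k l)
    rw [c21, abs_le]; constructor <;> linarith
  · have := abs_le.1 (hgg l c); rw [c31, abs_le]; constructor <;> linarith
  · rw [c23]; exact abs_rr_le_one hν hν2 _
  · rw [abs_le] at u20
    rw [c20, abs_le, errD]; constructor <;> linarith
  · rw [abs_le] at u31
    rw [c31, abs_le, errD]; constructor <;> linarith
  · rw [abs_le] at u30 ulk
    rw [c30, abs_le, errD]; constructor <;> linarith
  · rw [abs_le] at u21 ukl
    rw [c21, abs_le, errD]; constructor <;> linarith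

end

/-- The summands have mean `(-1/2)^q` and are uncorrelated up to small errors, with a constant
that depends on `q` only. -/
lemma summand_moments (q : ℕ) : ∃ C : ℝ, 0 ≤ C ∧
    ∀ (Ω : Type*) [MeasurableSpace Ω] (P : Measure Ω) [IsProbabilityMeasure P] (ν : ℝ)
      (x : ℝ → Ω → ℝ), 0 < ν → ν < 1 / 2 → IsFBM P ν x →
      ∀ n k l a c : ℕ, k < n → l < n → a ≤ n → c ≤ n → ∀ L : ℝ, 1 ≤ L →
        phi ν (k - a) ≤ L ^ 2 → phi ν (l - c) ≤ L ^ 2 →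
        |∫ ω, summand x ν n q a k ω * summand x ν n q c l ω ∂P - ((-1 / 2) ^ q) ^ 2| ≤
            C * (errD ν k l a c + |rr ν (gd k l)| * L ^ (2 * q)) ∧
        |∫ ω, summand x ν n q a k ω ∂P - (-1 / 2) ^ q| ≤
            C * (errD ν k l a c + |rr ν (gd k l)| * L ^ (2 * q)) := by
  obtain ⟨C₁, hC₁, h₁⟩ := WickRec.aligned (2 * q) q q (by omega)
  obtain ⟨C₂, hC₂, h₂⟩ := WickRec.aligned (2 * q) q 0 (by omega)
  refine ⟨max C₁ C₂, hC₁.trans (le_max_left _ _), ?_⟩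
  intro Ω _ P _ ν x hν hν2 hx n k l a c hk hl ha hc L hL hLa hLc
  obtain ⟨vA, vB, cAB, cAU, cAV, cBU, cBV, hW⟩ :=
    wickRec_fbm hν hν2 hx hk hl ha hc hL hLa hLc
  have e₁ := h₁ _ _ _ _ _ _ _ _ _ _ _ hW
  have e₂ := h₂ _ _ _ _ _ _ _ _ _ _ _ hW
  set E := errD ν k l a c + |rr ν (gd k l)| * L ^ (2 * q) with hE
  have hE0 : 0 ≤ E := by
    have : 0 ≤ errD ν k l a c := (abs_nonneg _).trans hW.hAU
    positivity
  have hq : (1 : ℝ) ≤ q.factorial := by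
    exact_mod_cast Nat.one_le_iff_ne_zero.2 (Nat.factorial_ne_zero _)
  have hq0 : (0 : ℝ) < q.factorial := by linarith
  constructor
  · have : ∫ ω, summand x ν n q a k ω * summand x ν n q c l ω ∂P =
        wickM P (fun i => inc x ν n (idxI k l i) (idxJ k l a c i)) q q q q /
          (q.factorial * q.factorial) := by
      rw [wickM, ← integral_div]
      congr 1
      funext ω
      rw [aeval_wickPoly]
      simp only [summand, idxI, idxJ, Matrix.cons_val]
      ring
    rw [this]
    have e : wickM P (fun i => inc x ν n (idxI k l i) (idxJ k l a c i)) q q q q /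
          (q.factorial * q.factorial) - ((-1 / 2) ^ q) ^ 2 =
        (wickM P (fun i => inc x ν n (idxI k l i) (idxJ k l a c i)) q q q q -
          q.factorial * q.factorial * (-1 / 2) ^ (q + q)) / (q.factorial * q.factorial) := by
      rw [pow_add]; field_simp
    rw [e, abs_div, abs_of_pos (by positivity : (0 : ℝ) < q.factorial * q.factorial)]
    refine (div_le_self (abs_nonneg _) (one_le_mul_of_one_le_of_one_le hq hq)).trans ?_
    refine e₁.trans ?_
    gcongr
    exact le_max_left _ _
  · have : ∫ ω, summand x ν n q a k ω ∂P =
        wickM P (fun i => inc x ν n (idxI k l i) (idxJ k l a c i)) q 0 q 0 / q.factorial := by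
      rw [wickM, ← integral_div]
      congr 1
      funext ω
      rw [aeval_wickPoly]
      simp only [summand, idxI, idxJ, Matrix.cons_val, pow_zero, Hq_eq_eval, hermR_zero,
        Polynomial.eval_one, mul_one]
    rw [this]
    have e : wickM P (fun i => inc x ν n (idxI k l i) (idxJ k l a c i)) q 0 q 0 /
          q.factorial - (-1 / 2) ^ q =
        (wickM P (fun i => inc x ν n (idxI k l i) (idxJ k l a c i)) q 0 q 0 -
          q.factorial * Nat.factorial 0 * (-1 / 2) ^ (q + 0)) / q.factorial := by
      simp only [Nat.factorial_zero, Nat.cast_one, mul_one, add_zero]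
      field_simp
    rw [e, abs_div, abs_of_pos hq0]
    refine (div_le_self (abs_nonneg _) hq).trans ?_
    refine e₂.trans ?_
    gcongr
    exact le_max_right _ _

/-! ### The variance of the rescaled sums -/

lemma lpAll_summand {P : Measure Ω} [IsProbabilityMeasure P] {ν : ℝ} {x : ℝ → Ω → ℝ}
    (hx : IsFBM P ν x) {n k a : ℕ} (hk : k < n) (ha : a ≤ n) (q : ℕ) :
    LpAll P (summand x ν n q a k) := by
  have hI : ∀ i, idxI k k i ≤ n := by intro i; fin_cases i <;> simp [idxI] <;> omega
  have hJ : ∀ i, idxJ k k a a i ≤ n := by intro i; fin_cases i <;> simp [idxJ] <;> omega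
  have h := (lpAll_wick (gaussian_inc hx (by omega) _ _ hI hJ) (wickPoly q 0 q 0)).mul
    (LpAll.const (q.factorial : ℝ)⁻¹)
  convert h using 1
  funext ω
  rw [aeval_wickPoly]
  simp only [summand, idxI, idxJ, Matrix.cons_val, pow_zero, Hq_eq_eval, hermR_zero,
    Polynomial.eval_one, mul_one]
  rfl

lemma errD_swap (ν : ℝ) (k l a c : ℕ) : errD ν l k c a = errD ν k l a c := by
  rw [errD, errD, gd_comm l k]; ring

/-- Summing the error terms over all pairs of grid points, when the base points `b k` take at
most `m` values. -/
lemma sum_errD {ν : ℝ} (hν : 0 < ν) {n m : ℕ} (K : Finset ℕ) (hK : K ⊆ Finset.range n)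
    (b β : ℕ → ℕ) (hβ : ∀ j < m, β j ≤ n) (hb : ∀ k ∈ K, ∃ j < m, b k = β j) :
    ∑ k ∈ K, ∑ l ∈ K, errD ν k l (b k) (b l) ≤
      n * (2 * (1 + (n : ℝ) ^ (2 * ν)) * (2 * m + 3)) := by
  set S : ℝ := 1 + (n : ℝ) ^ (2 * ν) with hS
  have hS0 : 0 ≤ S := by positivity
  have hcard : (K.card : ℝ) ≤ n := by
    have := Finset.card_le_card hK
    rw [Finset.card_range] at this
    exact_mod_cast this
  have hd := dd_nonneg (ν := ν)
  have hbn : ∀ k ∈ K, b k ≤ n := by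
    intro k hk
    obtain ⟨j, hj, e⟩ := hb k hk
    rw [e]; exact hβ j hj
  -- distances to a fixed grid point
  have hfix : ∀ i ≤ n, ∑ l ∈ K, dd ν (gd l i) ≤ 2 * S := by
    intro i hi
    rw [hS, ← sum_dd hν]
    refine le_trans ?_ (sum_gd (dd ν) hd hi)
    exact Finset.sum_le_sum_of_subset_of_nonneg hK fun _ _ _ => hd _
  have hsum : ∀ f : ℕ → ℝ, (∀ k ∈ K, f k ≤ 2 * S) → ∑ k ∈ K, f k ≤ n * (2 * S) := by
    intro f hf
    refine (Finset.sum_le_card_nsmul K f _ hf).trans ?_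
    rw [nsmul_eq_mul]
    gcongr
  have hdiag : ∑ k ∈ K, dd ν (gd k (b k)) ≤ m * (2 * S) := by
    calc ∑ k ∈ K, dd ν (gd k (b k)) ≤ ∑ k ∈ K, ∑ j ∈ Finset.range m, dd ν (gd k (β j)) := by
          refine Finset.sum_le_sum fun k hk => ?_
          obtain ⟨j, hj, e⟩ := hb k hk
          rw [e]
          exact Finset.single_le_sum (f := fun j => dd ν (gd k (β j))) (fun _ _ => hd _)
            (Finset.mem_range.2 hj)
      _ = ∑ j ∈ Finset.range m, ∑ k ∈ K, dd ν (gd k (β j)) := Finset.sum_comm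
      _ ≤ ∑ j ∈ Finset.range m, 2 * S :=
          Finset.sum_le_sum fun j hj => hfix _ (hβ j (Finset.mem_range.1 hj))
      _ = m * (2 * S) := by simp
  have h1 : ∑ k ∈ K, ∑ l ∈ K, dd ν (gd k l) ≤ n * (2 * S) := by
    refine hsum _ fun k hk => ?_
    simp_rw [gd_comm k]
    exact hfix k (Finset.mem_range.1 (hK hk)).le
  have h2 : ∑ k ∈ K, ∑ _l ∈ K, dd ν (gd k (b k)) ≤ n * (m * (2 * S)) := by
    simp_rw [Finset.sum_const, nsmul_eq_mul, ← Finset.mul_sum]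
    have : 0 ≤ ∑ k ∈ K, dd ν (gd k (b k)) := Finset.sum_nonneg fun _ _ => hd _
    gcongr
  have h3 : ∑ k ∈ K, ∑ l ∈ K, dd ν (gd l (b k)) ≤ n * (2 * S) :=
    hsum _ fun k hk => hfix _ (hbn k hk)
  have h4 : ∑ k ∈ K, ∑ l ∈ K, dd ν (gd k (b l)) ≤ n * (2 * S) := by
    rw [Finset.sum_comm]; exact h3
  have h5 : ∑ _k ∈ K, ∑ l ∈ K, dd ν (gd l (b l)) ≤ n * (m * (2 * S)) := by
    rw [Finset.sum_comm]; exact h2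
  simp only [errD, Finset.sum_add_distrib]
  calc _ ≤ n * (2 * S) + n * (m * (2 * S)) + n * (2 * S) + n * (2 * S) + n * (m * (2 * S)) := by
        gcongr
    _ = _ := by ring

lemma sum_rr {ν : ℝ} (hν : 0 < ν) (hν2 : ν < 1 / 2) {n : ℕ} (K : Finset ℕ)
    (hK : K ⊆ Finset.range n) : ∑ k ∈ K, ∑ l ∈ K, |rr ν (gd k l)| ≤ n * 4 := by
  have hcard : (K.card : ℝ) ≤ n := by
    have := Finset.card_le_card hK
    rw [Finset.card_range] at this
    exact_mod_cast this
  have : ∀ k ∈ K, ∑ l ∈ K, |rr ν (gd k l)| ≤ 4 := by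
    intro k hk
    simp_rw [gd_comm k]
    calc ∑ l ∈ K, |rr ν (gd l k)| ≤ ∑ l ∈ Finset.range n, |rr ν (gd l k)| :=
          Finset.sum_le_sum_of_subset_of_nonneg hK fun _ _ _ => abs_nonneg _
      _ ≤ 2 * ∑ w ∈ Finset.range (n + 1), |rr ν w| :=
          sum_gd (fun w => |rr ν w|) (fun _ => abs_nonneg _) (Finset.mem_range.1 (hK hk)).le
      _ ≤ 4 := by linarith [sum_abs_rr hν hν2 n]
  refine (Finset.sum_le_card_nsmul K _ _ this).trans ?_
  rw [nsmul_eq_mul]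
  gcongr

/-- The quantitative form of the result: the mean square distance of the averaged sum from
`(-1/2)^q τ`, when the sum has `n τ` terms up to rounding, the base points take at most `m`
values, and the variances of the increments from the base points are at most `L²`. -/
lemma variation_bound (q : ℕ) : ∃ C : ℝ, 0 ≤ C ∧
    ∀ (Ω : Type*) [MeasurableSpace Ω] (P : Measure Ω) [IsProbabilityMeasure P] (ν : ℝ)
      (x : ℝ → Ω → ℝ), 0 < ν → ν < 1 / 2 → IsFBM P ν x →
      ∀ (n m : ℕ) (K : Finset ℕ) (b β : ℕ → ℕ) (L τ : ℝ), 0 < n → K ⊆ Finset.range n →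
        (∀ j < m, β j ≤ n) → (∀ k ∈ K, ∃ j < m, b k = β j) → 1 ≤ L →
        (∀ k ∈ K, phi ν (k - b k) ≤ L ^ 2) → |(K.card : ℝ) - n * τ| ≤ 1 →
        ∫ ω, ((n : ℝ)⁻¹ * (∑ k ∈ K, summand x ν n q (b k) k ω) - (-1 / 2) ^ q * τ) ^ 2 ∂P ≤
          C * ((1 + (n : ℝ) ^ (2 * ν)) * (2 * m + 3) + L ^ (2 * q)) / n + 2 / (n : ℝ) ^ 2 := by
  obtain ⟨C, hC, hM⟩ := summand_moments q
  refine ⟨2 * (3 * C * 4), by positivity, ?_⟩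
  intro Ω _ P _ ν x hν hν2 hx n m K b β L τ hn hK hβ hb hL hφ hcard
  have hn' : (0 : ℝ) < n := by exact_mod_cast hn
  set θ : ℝ := (-1 / 2) ^ q with hθ
  have hθ1 : |θ| ≤ 1 := by
    rw [hθ, abs_pow]
    exact pow_le_one₀ (abs_nonneg _) (by norm_num [abs_le])
  have hbn : ∀ k ∈ K, b k ≤ n := by
    intro k hk
    obtain ⟨j, hj, e⟩ := hb k hk
    rw [e]; exact hβ j hj
  have hkn : ∀ k ∈ K, k < n := fun k hk => Finset.mem_range.1 (hK hk)
  set Y : ℕ → Ω → ℝ := fun k => summand x ν n q (b k) k with hY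
  have hYL : ∀ k ∈ K, LpAll P (Y k) := fun k hk => lpAll_summand hx (hkn k hk) (hbn k hk) q
  have hYc : ∀ k ∈ K, LpAll P (fun ω => Y k ω + -θ) := fun k hk =>
    (hYL k hk).add (LpAll.const _)
  set F : ℕ → ℕ → ℝ := fun k l => errD ν k l (b k) (b l) + |rr ν (gd k l)| * L ^ (2 * q) with hF
  -- the covariance of two centered summands
  have hcov : ∀ k ∈ K, ∀ l ∈ K, ∫ ω, (Y k ω + -θ) * (Y l ω + -θ) ∂P ≤ 3 * C * F k l := by
    intro k hk l hl
    obtain ⟨h1, h2⟩ := hM Ω P ν x hν hν2 hx n k l (b k) (b l) (hkn k hk) (hkn l hl) (hbn k hk)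
      (hbn l hl) L hL (hφ k hk) (hφ l hl)
    obtain ⟨-, h3⟩ := hM Ω P ν x hν hν2 hx n l k (b l) (b k) (hkn l hl) (hkn k hk) (hbn l hl)
      (hbn k hk) L hL (hφ l hl) (hφ k hk)
    rw [errD_swap, gd_comm l k] at h3
    have hi1 := ((hYL k hk).mul (hYL l hl)).integrable
    have hi2 := (hYL k hk).integrable
    have hi3 := (hYL l hl).integrable
    have e : ∫ ω, (Y k ω + -θ) * (Y l ω + -θ) ∂P =
        (∫ ω, Y k ω * Y l ω ∂P - θ ^ 2) - θ * (∫ ω, Y k ω ∂P - θ) -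
          θ * (∫ ω, Y l ω ∂P - θ) := by
      have : ∀ ω, (Y k ω + -θ) * (Y l ω + -θ) =
          Y k ω * Y l ω - θ * Y k ω - θ * Y l ω + θ ^ 2 := fun ω => by ring
      simp_rw [this]
      have j2 : Integrable (fun ω => Y k ω * Y l ω - θ * Y k ω) P := hi1.sub (hi2.const_mul θ)
      have j3 : Integrable (fun ω => Y k ω * Y l ω - θ * Y k ω - θ * Y l ω) P :=
        j2.sub (hi3.const_mul θ)
      rw [integral_add j3 (integrable_const _), integral_sub j2 (hi3.const_mul θ),
        integral_sub hi1 (hi2.const_mul θ), integral_const_mul, integral_const_mul]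
      simp
      ring
    have g1 := (le_abs_self _).trans h1
    have g2 : -(θ * (∫ ω, Y k ω ∂P - θ)) ≤ C * F k l := by
      refine (neg_le_abs _).trans ?_
      rw [abs_mul]
      calc |θ| * |∫ ω, Y k ω ∂P - θ| ≤ 1 * |∫ ω, Y k ω ∂P - θ| := by gcongr
        _ ≤ _ := by rw [one_mul]; exact h2
    have g3 : -(θ * (∫ ω, Y l ω ∂P - θ)) ≤ C * F k l := by
      refine (neg_le_abs _).trans ?_
      rw [abs_mul]
      calc |θ| * |∫ ω, Y l ω ∂P - θ| ≤ 1 * |∫ ω, Y l ω ∂P - θ| := by gcongr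
        _ ≤ _ := by rw [one_mul]; exact h3
    rw [e]
    simp only [hF] at g2 g3 ⊢
    linarith
  set T : ℝ := (1 + (n : ℝ) ^ (2 * ν)) * (2 * m + 3) + L ^ (2 * q) with hT
  have hvar : ∫ ω, (∑ k ∈ K, (Y k ω + -θ)) ^ 2 ∂P ≤ 3 * C * (n * (4 * T)) := by
    have : ∀ ω, (∑ k ∈ K, (Y k ω + -θ)) ^ 2 =
        ∑ k ∈ K, ∑ l ∈ K, (Y k ω + -θ) * (Y l ω + -θ) := by
      intro ω; rw [sq, Finset.sum_mul_sum]
    simp_rw [this]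
    rw [integral_finsetSum _ fun k hk => integrable_finsetSum _ fun l hl =>
      ((hYc k hk).mul (hYc l hl)).integrable]
    calc ∑ k ∈ K, ∫ ω, ∑ l ∈ K, (Y k ω + -θ) * (Y l ω + -θ) ∂P
        = ∑ k ∈ K, ∑ l ∈ K, ∫ ω, (Y k ω + -θ) * (Y l ω + -θ) ∂P := by
          refine Finset.sum_congr rfl fun k hk => ?_
          rw [integral_finsetSum _ fun l hl => ((hYc k hk).mul (hYc l hl)).integrable]
      _ ≤ ∑ k ∈ K, ∑ l ∈ K, 3 * C * F k l :=
          Finset.sum_le_sum fun k hk => Finset.sum_le_sum fun l hl => hcov k hk l hl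
      _ = 3 * C * (∑ k ∈ K, ∑ l ∈ K, errD ν k l (b k) (b l) +
            (∑ k ∈ K, ∑ l ∈ K, |rr ν (gd k l)|) * L ^ (2 * q)) := by
          simp_rw [← Finset.mul_sum, hF, Finset.sum_add_distrib, Finset.sum_mul]
      _ ≤ 3 * C * (n * (2 * (1 + (n : ℝ) ^ (2 * ν)) * (2 * m + 3)) + n * 4 * L ^ (2 * q)) := by
          gcongr
          · exact sum_errD hν K hK b β hβ hb
          · exact sum_rr hν hν2 K hK
      _ ≤ 3 * C * (n * (4 * T)) := by
          gcongr
          have : 0 ≤ n * ((1 + (n : ℝ) ^ (2 * ν)) * (2 * m + 3)) := by positivity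
          rw [hT]; linarith
  have hsumL : LpAll P (fun ω => ∑ k ∈ K, (Y k ω + -θ)) := fun p hp =>
    memLp_finsetSum _ fun k hk => hYc k hk p hp
  have hpt : ∀ ω, ((n : ℝ)⁻¹ * (∑ k ∈ K, Y k ω) - θ * τ) ^ 2 ≤
      2 / (n : ℝ) ^ 2 * (∑ k ∈ K, (Y k ω + -θ)) ^ 2 + 2 / (n : ℝ) ^ 2 := by
    intro ω
    have e : (n : ℝ)⁻¹ * (∑ k ∈ K, Y k ω) - θ * τ =
        ((∑ k ∈ K, (Y k ω + -θ)) + θ * ((K.card : ℝ) - n * τ)) / n := by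
      rw [Finset.sum_add_distrib, Finset.sum_const, nsmul_eq_mul]
      field_simp
      ring
    have hθ2 : (θ * ((K.card : ℝ) - n * τ)) ^ 2 ≤ 1 := by
      rw [sq_le_one_iff_abs_le_one, abs_mul]
      exact mul_le_one₀ hθ1 (abs_nonneg _) hcard
    rw [e, div_pow, div_mul_eq_mul_div, ← add_div]
    gcongr
    nlinarith [sq_nonneg ((∑ k ∈ K, (Y k ω + -θ)) - θ * ((K.card : ℝ) - n * τ))]
  have hsq_int : Integrable (fun ω => (∑ k ∈ K, (Y k ω + -θ)) ^ 2) P := (hsumL.pow 2).integrable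
  calc ∫ ω, ((n : ℝ)⁻¹ * (∑ k ∈ K, Y k ω) - θ * τ) ^ 2 ∂P
      ≤ ∫ ω, (2 / (n : ℝ) ^ 2 * (∑ k ∈ K, (Y k ω + -θ)) ^ 2 + 2 / (n : ℝ) ^ 2) ∂P :=
        integral_mono_of_nonneg (Eventually.of_forall fun ω => sq_nonneg _)
          ((hsq_int.const_mul _).add (integrable_const _)) (Eventually.of_forall hpt)
    _ = 2 / (n : ℝ) ^ 2 * ∫ ω, (∑ k ∈ K, (Y k ω + -θ)) ^ 2 ∂P + 2 / (n : ℝ) ^ 2 := by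
        rw [integral_add (hsq_int.const_mul _) (integrable_const _), integral_const_mul]
        simp
    _ ≤ 2 / (n : ℝ) ^ 2 * (3 * C * (n * (4 * T))) + 2 / (n : ℝ) ^ 2 := by gcongr
    _ = _ := by field_simp

/-! ### Reduction of the discrete integrals to averaged sums -/

/-- The indices of the grid points `k / n` that lie in `[s, t)`. -/
def gridIdx (n : ℕ) (s t : ℝ) : Finset ℕ :=
  (Finset.range n).filter fun k => s ≤ (k : ℝ) / n ∧ (k : ℝ) / n < t

lemma gridIdx_eq_Ico {n : ℕ} (hn : 0 < n) {s t : ℝ} (ht : t ≤ 1) :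
    gridIdx n s t = Finset.Ico ⌈n * s⌉₊ ⌈n * t⌉₊ := by
  have hn' : (0 : ℝ) < n := by exact_mod_cast hn
  ext k
  rw [gridIdx, Finset.mem_filter, Finset.mem_range, Finset.mem_Ico, Nat.ceil_le, Nat.lt_ceil,
    le_div_iff₀' hn', div_lt_iff₀' hn']
  refine ⟨fun h => h.2, fun h => ⟨?_, h⟩⟩
  have : (k : ℝ) < n := h.2.trans_le (by nlinarith)
  exact_mod_cast this

lemma gridIdx_card {n : ℕ} (hn : 0 < n) {s t : ℝ} (hs : 0 ≤ s) (hst : s ≤ t) (ht : t ≤ 1) :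
    |((gridIdx n s t).card : ℝ) - n * (t - s)| ≤ 1 := by
  have hns : (0 : ℝ) ≤ n * s := by positivity
  have hle : (n : ℝ) * s ≤ n * t := by gcongr
  rw [gridIdx_eq_Ico hn ht, Nat.card_Ico, Nat.cast_sub (Nat.ceil_mono hle), abs_le]
  have h1 := Nat.le_ceil ((n : ℝ) * s)
  have h2 := Nat.ceil_lt_add_one hns
  have h3 := Nat.le_ceil ((n : ℝ) * t)
  have h4 := Nat.ceil_lt_add_one (hns.trans hle)
  constructor <;> linarith

/-- The grid point `eps n s` has index `⌈n s⌉`, and rescaling the `q` increments in `x^q` costs a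
factor `n^(-qν)`. -/
lemma Jtwo_eq {E : Type*} {x : ℝ → E → ℝ} {ν : ℝ} {n q : ℕ} (hn : 0 < n) {s : ℝ} (hs : 0 ≤ s) (t : ℝ)
    (ω : E) : Jtwo n (xlift x q) (hermIncr x ν n q) s t ω =
      ∑ k ∈ gridIdx n s t, (n : ℝ) ^ (-(q * ν)) * summand x ν n q ⌈n * s⌉₊ k ω := by
  have hn' : (0 : ℝ) < n := by exact_mod_cast hn
  have he : eps n s = (⌈n * s⌉₊ : ℝ) / n := by
    rw [eps, natCast_ceil_eq_intCast_ceil (by positivity)]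
  have hpow : (n : ℝ) ^ (-(q * ν)) * ((n : ℝ) ^ ν) ^ q = 1 := by
    rw [← Real.rpow_natCast, ← Real.rpow_mul hn'.le, ← Real.rpow_add hn']
    simp [mul_comm]
  rw [Jtwo, gridIdx, Finset.sum_filter]
  refine Finset.sum_congr rfl fun k _ => ?_
  split_ifs
  · rw [xlift, hermIncr, summand, he, inc, inc, mul_pow, Nat.cast_add_one]
    linear_combination (-((x (k / n) ω - x (⌈n * s⌉₊ / n) ω) ^ q *
      Hq q ((n : ℝ) ^ ν * (x (((k : ℝ) + 1) / n) ω - x ((k : ℝ) / n) ω)) / q.factorial)) * hpow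
  · rfl

/-- Consecutive blocks `[S j, S (j + 1))` merge into one block, over which the base point `b k`
is the first grid point of the block that contains `k / n`. -/
lemma exists_base (n : ℕ) (S : ℕ → ℝ) (i : ℕ) (hS : ∀ j < i, S j ≤ S (j + 1)) :
    S 0 ≤ S i ∧ ∃ b : ℕ → ℕ, (∀ k ∈ gridIdx n (S 0) (S i), ∃ j < i, b k = ⌈n * S j⌉₊ ∧
        S j ≤ (k : ℝ) / n ∧ (k : ℝ) / n < S (j + 1)) ∧
      ∀ g : ℕ → ℕ → ℝ, ∑ j ∈ Finset.range i, ∑ k ∈ gridIdx n (S j) (S (j + 1)), g ⌈n * S j⌉₊ k =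
        ∑ k ∈ gridIdx n (S 0) (S i), g (b k) k := by
  induction i with
  | zero =>
    refine ⟨le_rfl, fun _ => 0, fun k hk => ?_, fun g => ?_⟩
    · have := (Finset.mem_filter.1 hk).2
      linarith [this.1, this.2]
    · rw [Finset.range_zero, Finset.sum_empty, gridIdx, Finset.filter_false_of_mem,
        Finset.sum_empty]
      intro k _ h
      linarith [h.1, h.2]
  | succ i ih =>
    obtain ⟨h0, b, hb, hg⟩ := ih fun j hj => hS j (by omega)
    have hi := hS i (by omega)
    refine ⟨h0.trans hi, fun k => if (k : ℝ) / n < S i then b k else ⌈n * S i⌉₊, ?_, ?_⟩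
    · intro k hk
      obtain ⟨hkn, hk1, hk2⟩ := Finset.mem_filter.1 hk
      by_cases h : (k : ℝ) / n < S i
      · obtain ⟨j, hj, e⟩ := hb k (Finset.mem_filter.2 ⟨hkn, hk1, h⟩)
        exact ⟨j, by omega, by simpa only [if_pos h] using e⟩
      · exact ⟨i, by omega, if_neg h, not_lt.1 h, hk2⟩
    · intro g
      rw [Finset.sum_range_succ, hg]
      simp only [gridIdx, Finset.sum_filter]
      rw [← Finset.sum_add_distrib]
      refine Finset.sum_congr rfl fun k _ => ?_
      by_cases h : (k : ℝ) / n < S i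
      · have h' : ¬ S i ≤ (k : ℝ) / n := not_le.2 h
        have h2 : (k : ℝ) / n < S (i + 1) := h.trans_le hi
        simp [h, h', h2]
      · have h' := not_lt.1 h
        simp [h, h', h0.trans h']

lemma phi_le_sq {ν : ℝ} (hν : 0 < ν) {z y : ℝ} (hz : 0 ≤ z) (hzy : z ≤ y) :
    phi ν z ≤ (y ^ ν) ^ 2 := by
  have hy := hz.trans hzy
  refine (phi_mono hν hz hzy).trans_eq ?_
  rw [phi, abs_of_nonneg hy, ← Real.rpow_natCast, ← Real.rpow_mul hy, mul_comm]
  norm_num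

lemma tendsto_rpow_div_nat {p : ℝ} (hp : p < 1) :
    Tendsto (fun n : ℕ => (n : ℝ) ^ p / n) atTop (nhds 0) := by
  have h := (tendsto_rpow_neg_atTop (sub_pos.2 hp)).comp tendsto_natCast_atTop_atTop
  refine h.congr' ?_
  filter_upwards [eventually_gt_atTop 0] with n hn
  have hn' : (0 : ℝ) < n := by exact_mod_cast hn
  rw [Function.comp_apply, neg_sub, Real.rpow_sub hn', Real.rpow_one]

lemma tendsto_bound (C ν D c : ℝ) (hν2 : ν < 1 / 2) {f : ℕ → ℝ}
    (hf : Tendsto (fun n : ℕ => f n / n) atTop (nhds c)) :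
    Tendsto (fun n : ℕ => C * ((1 + (n : ℝ) ^ (2 * ν)) * D + f n) / n + 2 / (n : ℝ) ^ 2)
      atTop (nhds (C * c)) := by
  have h1 : Tendsto (fun n : ℕ => 1 / (n : ℝ)) atTop (nhds 0) := tendsto_one_div_atTop_nhds_zero_nat
  have h2 := tendsto_rpow_div_nat (p := 2 * ν) (by linarith)
  have h := ((((h1.add h2).mul_const D).add hf).const_mul C).add ((h1.pow 2).const_mul 2)
  convert h using 1
  · funext n; ring
  · simp

/-- **Deterministic limits of coarse-grained Hermite variations** (Lemma 4.9):
(i) in the critical case `ν = 1/(2q)`, the coarse-grained sums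
`n^{-1/2} ∑_j J_{s_j}^{s_{j+1}}(x^q;h^{n,q})` converge, in the iterated limit
`m → ∞`, `n → ∞`, to `(-1/2)^q (t-s)` in `L²`;
(ii) if `ν < 1/(2q)`, then `n^{-(1-qν)} J_s^t(x^q;h^{n,q}) → (-1/2)^q (t-s)` in `L²`. -/
theorem hermite_variation_deterministic_limits
    {Ω : Type*} [MeasurableSpace Ω] (P : Measure Ω) [IsProbabilityMeasure P]
    (ν : ℝ) (hν : 0 < ν) (hν2 : ν < 1 / 2)
    (q : ℕ) (hq : 1 ≤ q)
    (x : ℝ → Ω → ℝ) (hx : IsFBM P ν x) :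
    (ν = 1 / (2 * q) →
      ∀ s t : ℝ, 0 ≤ s → s < t → t ≤ 1 → ∀ S : ℕ → ℕ → ℝ,
        (∀ m : ℕ, 1 ≤ m → S m 0 = s ∧ S m m = t ∧
          (∀ j < m, S m j < S m (j + 1)) ∧ (∀ j < m, S m (j + 1) - S m j ≤ 1 / m)) →
        Tendsto (fun m => Filter.limsup (fun n : ℕ => ENNReal.ofReal
            (∫ ω, ((n : ℝ) ^ (-(1 : ℝ) / 2) * (∑ j ∈ Finset.range m,
                Jtwo n (xlift x q) (hermIncr x ν n q) (S m j) (S m (j + 1)) ω) -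
              (-(1 : ℝ) / 2) ^ q * (t - s)) ^ 2 ∂P)) atTop)
          atTop (nhds 0)) ∧
    (ν < 1 / (2 * q) →
      ∀ s t : ℝ, 0 ≤ s → s < t → t ≤ 1 →
        Tendsto (fun n : ℕ =>
            ∫ ω, ((n : ℝ) ^ (-(1 - (q : ℝ) * ν)) *
                Jtwo n (xlift x q) (hermIncr x ν n q) s t ω -
              (-(1 : ℝ) / 2) ^ q * (t - s)) ^ 2 ∂P)
          atTop (nhds 0)) := by
  obtain ⟨C, hC, hB⟩ := variation_bound q
  have hq' : (0 : ℝ) < q := by exact_mod_cast hq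
  constructor
  · intro hνq s t hs hst ht S hS
    have hqν : q * ν = 1 / 2 := by rw [hνq]; field_simp
    -- for fixed `m`, the bound on the mean square tends to `C / m` as `n → ∞`
    have hm : ∀ m : ℕ, 1 ≤ m → Filter.limsup (fun n : ℕ => ENNReal.ofReal
            (∫ ω, ((n : ℝ) ^ (-(1 : ℝ) / 2) * (∑ j ∈ Finset.range m,
                Jtwo n (xlift x q) (hermIncr x ν n q) (S m j) (S m (j + 1)) ω) -
              (-(1 : ℝ) / 2) ^ q * (t - s)) ^ 2 ∂P)) atTop ≤ ENNReal.ofReal (C * (1 / m)) := by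
      intro m hm
      obtain ⟨hS0, hSm, hSlt, hSle⟩ := hS m hm
      have hm' : (0 : ℝ) < m := by exact_mod_cast hm
      have hmono : ∀ j ≤ m, S m 0 ≤ S m j := fun j hj =>
        (exists_base 0 (S m) j fun i hi => (hSlt i (by omega)).le).1
      have hmono' : ∀ j ≤ m, S m j ≤ S m m := fun j hj => by
        have := (exists_base 0 (fun i => S m (j + i)) (m - j)
          fun i hi => (hSlt (j + i) (by omega)).le).1
        simpa [Nat.add_sub_cancel' hj] using this
      have hlim : Tendsto (fun n : ℕ => C * ((1 + (n : ℝ) ^ (2 * ν)) * (2 * m + 3) + (n : ℝ) / m) / n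
          + 2 / (n : ℝ) ^ 2) atTop (nhds (C * (1 / m))) := by
        refine tendsto_bound C ν _ _ hν2 (tendsto_const_nhds.congr' ?_)
        filter_upwards [eventually_gt_atTop 0] with n hn
        have hn' : (n : ℝ) ≠ 0 := by exact_mod_cast hn.ne'
        field_simp
      rw [← ((ENNReal.continuous_ofReal.tendsto _).comp hlim).limsup_eq]
      refine limsup_le_limsup ?_
      filter_upwards [eventually_ge_atTop m] with n hnm
      have hn : 0 < n := by omega
      have hn' : (0 : ℝ) < n := by exact_mod_cast hn
      have hnm' : 1 ≤ (n : ℝ) / m := by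
        rw [one_le_div hm']; exact_mod_cast hnm
      refine ENNReal.ofReal_le_ofReal ?_
      obtain ⟨-, b, hb, hg⟩ := exists_base n (S m) m fun j hj => (hSlt j hj).le
      rw [hS0, hSm] at hb hg
      have key := hB Ω P ν x hν hν2 hx n m (gridIdx n s t) b (fun j => ⌈n * S m j⌉₊)
        (((n : ℝ) / m) ^ ν) (t - s) hn (Finset.filter_subset _ _) ?_ ?_
        (Real.one_le_rpow hnm' hν.le) ?_ (gridIdx_card hn hs hst.le ht)
      · have hL : (((n : ℝ) / m) ^ ν) ^ (2 * q) = (n : ℝ) / m := by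
          rw [← Real.rpow_natCast, ← Real.rpow_mul (by positivity), Nat.cast_mul, Nat.cast_ofNat]
          rw [show ν * (2 * (q : ℝ)) = 1 by linarith, Real.rpow_one]
        rw [hL] at key
        refine (integral_congr_ae (Eventually.of_forall fun ω => ?_)).trans_le key
        congr 2
        have : ∀ j ∈ Finset.range m,
            Jtwo n (xlift x q) (hermIncr x ν n q) (S m j) (S m (j + 1)) ω =
              ∑ k ∈ gridIdx n (S m j) (S m (j + 1)),
                (n : ℝ) ^ (-(q * ν)) * summand x ν n q ⌈n * S m j⌉₊ k ω := by
          intro j hj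
          refine Jtwo_eq hn ?_ _ _
          exact hs.trans (hS0 ▸ hmono j (Finset.mem_range.1 hj).le)
        rw [Finset.sum_congr rfl this, hg fun a k => (n : ℝ) ^ (-(q * ν)) * summand x ν n q a k ω,
          ← Finset.mul_sum, ← mul_assoc, hqν, ← Real.rpow_add hn', ← Real.rpow_neg_one]
        norm_num
      · intro j hj
        rw [Nat.ceil_le]
        have : S m j ≤ 1 := (hmono' j hj.le).trans (hSm ▸ ht)
        nlinarith
      · intro k hk
        obtain ⟨j, hj, e, -⟩ := hb k hk
        exact ⟨j, hj, e⟩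
      · intro k hk
        obtain ⟨j, hj, e, h1, h2⟩ := hb k hk
        rw [le_div_iff₀' hn'] at h1
        rw [div_lt_iff₀' hn'] at h2
        have h3 : (b k : ℝ) ≤ k := by
          rw [e]; exact_mod_cast Nat.ceil_le.2 h1
        have h4 : n * S m j ≤ b k := by rw [e]; exact Nat.le_ceil _
        have h5 : n * (S m (j + 1) - S m j) ≤ n * (1 / m) := by
          gcongr; exact hSle j hj
        refine phi_le_sq hν (by linarith) ?_
        rw [div_eq_mul_one_div]
        linarith
    have h0 : Tendsto (fun m : ℕ => ENNReal.ofReal (C * (1 / m))) atTop (nhds 0) := by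
      have := (tendsto_one_div_atTop_nhds_zero_nat (𝕜 := ℝ)).const_mul C
      simpa [Function.comp_def] using (ENNReal.continuous_ofReal.tendsto _).comp this
    refine tendsto_of_tendsto_of_tendsto_of_le_of_le' tendsto_const_nhds h0
      (Eventually.of_forall fun _ => zero_le) ?_
    filter_upwards [eventually_ge_atTop 1] with m h using hm m h
  · intro hνq s t hs hst ht
    have hqν : q * ν < 1 / 2 := by
      rw [lt_div_iff₀ (by positivity)] at hνq; linarith
    have hlim := tendsto_bound C ν (2 * (1 : ℕ) + 3) 0 hν2
      (tendsto_rpow_div_nat (p := 2 * (q * ν)) (by linarith))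
    rw [mul_zero] at hlim
    refine squeeze_zero' (Eventually.of_forall fun n => integral_nonneg fun ω => sq_nonneg _) ?_ hlim
    filter_upwards [eventually_gt_atTop 0] with n hn
    have hn' : (0 : ℝ) < n := by exact_mod_cast hn
    have hn1 : (1 : ℝ) ≤ n := by exact_mod_cast hn
    have key := hB Ω P ν x hν hν2 hx n 1 (gridIdx n s t) (fun _ => ⌈n * s⌉₊) (fun _ => ⌈n * s⌉₊)
      ((n : ℝ) ^ ν) (t - s) hn (Finset.filter_subset _ _) ?_ (fun _ _ => ⟨0, by simp, rfl⟩)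
      (Real.one_le_rpow hn1 hν.le) ?_ (gridIdx_card hn hs hst.le ht)
    · have hL : ((n : ℝ) ^ ν) ^ (2 * q) = (n : ℝ) ^ (2 * (q * ν)) := by
        rw [← Real.rpow_natCast, ← Real.rpow_mul hn'.le, Nat.cast_mul, Nat.cast_ofNat]
        congr 1; ring
      rw [hL] at key
      refine (integral_congr_ae (Eventually.of_forall fun ω => ?_)).trans_le key
      congr 2
      rw [Jtwo_eq hn hs, ← Finset.mul_sum, ← mul_assoc, ← Real.rpow_add hn', ← Real.rpow_neg_one]
      congr 2; ring
    · intro j _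
      rw [Nat.ceil_le]
      nlinarith
    · intro k hk
      rw [gridIdx_eq_Ico hn ht, Finset.mem_Ico] at hk
      have h1 : (⌈n * s⌉₊ : ℝ) ≤ k := by exact_mod_cast hk.1
      have h2 : (k : ℝ) < n * t := Nat.lt_ceil.1 hk.2
      have h3 : (0 : ℝ) ≤ ⌈n * s⌉₊ := Nat.cast_nonneg _
      exact phi_le_sq hν (by linarith) (by nlinarith)

end
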